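/- Let N ⊂ B(H) be a continuous von Neumann algebra and β a *-antiautomorphism of N of order 2. Then N (regarded as a TRO), together with the inclusion map H(N,β) ↪ N, is a universal enveloping TRO of the JC*-triple H(N,β): H(N,β) generates N as a TRO, and every triple homomorphism π from H(N,β) into a TRO S extends to a TRO homomorphism π̃ : N → S with π̃ restricting to π on H(N,β); that is, T*(H(N,β)) = N. -/

import Mathlib

open ContinuousLinearMap

noncomputable section

/-- The ternary product `x y* z` of bounded operators in `B(K,H)`. -/
def tri {K H : Type} [NormedAddCommGroup K] [InnerProductSpace ℂ K] [CompleteSpace K]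
    [NormedAddCommGroup H] [InnerProductSpace ℂ H] [CompleteSpace H]
    (x y z : K →L[ℂ] H) : K →L[ℂ] H := x ∘L (adjoint y) ∘L z

/-- The Jordan triple product `{x,y,z} = (x y* z + z y* x)/2`. -/
def jtri {K H : Type} [NormedAddCommGroup K] [InnerProductSpace ℂ K] [CompleteSpace K]
    [NormedAddCommGroup H] [InnerProductSpace ℂ H] [CompleteSpace H]
    (x y z : K →L[ℂ] H) : K →L[ℂ] H := (2 : ℂ)⁻¹ • (tri x y z + tri z y x)

/-- A TRO: a norm-closed subspace of `B(K,H)` closed under `x y* z`. -/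
def IsTRO {K H : Type} [NormedAddCommGroup K] [InnerProductSpace ℂ K] [CompleteSpace K]
    [NormedAddCommGroup H] [InnerProductSpace ℂ H] [CompleteSpace H]
    (T : Submodule ℂ (K →L[ℂ] H)) : Prop :=
  IsClosed (T : Set (K →L[ℂ] H)) ∧ ∀ x ∈ T, ∀ y ∈ T, ∀ z ∈ T, tri x y z ∈ T

variable {H : Type} [NormedAddCommGroup H] [InnerProductSpace ℂ H] [CompleteSpace H]

/-- A von Neumann algebra is continuous if it contains no nonzero abelian projection. -/
def IsContinuousVNA (N : VonNeumannAlgebra H) : Prop :=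
  ∀ q : H →L[ℂ] H, q ∈ N → IsSelfAdjoint q → q * q = q →
    (∀ x ∈ N, ∀ y ∈ N, (q * x * q) * (q * y * q) = (q * y * q) * (q * x * q)) → q = 0

/-- A von Neumann algebra `N`, regarded as a subspace of `B(H)`. -/
def vnSubmodule (N : VonNeumannAlgebra H) : Submodule ℂ (H →L[ℂ] H) :=
  Subalgebra.toSubmodule N.toStarSubalgebra.toSubalgebra

/-- The selfadjoint-type part `H(N,β) = {x ∈ N : β x = x}` of a von Neumann algebra with a
*-antiautomorphism `β` of order 2. -/
def hermPart (N : VonNeumannAlgebra H) (β : (H →L[ℂ] H) →ₗ[ℂ] (H →L[ℂ] H)) :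
    Submodule ℂ (H →L[ℂ] H) :=
  vnSubmodule N ⊓ LinearMap.eqLocus β LinearMap.id

/-!
Since `N` has no abelian projection, below every nonzero projection fixed by `β` there is a nonzero
partial isometry `w` of square zero with `β w = w*`. Two such steps produce four orthogonal
equivalent projections, and exhaustion by Zorn's lemma yields 4 × 4 matrix units `eᵢⱼ` of `N` which
`β` transposes.

With such units every corner is recovered from symmetric elements: `eᵢᵢ x eⱼⱼ = eᵢᵢ s eⱼⱼ` for
`i ≠ j`, where `s` is the symmetrization of `eᵢᵢ x eⱼⱼ`. Hence the symmetric elements generate `N`,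
and, as in the coordinatization theorem of Jacobson, a Jordan homomorphism `ρ` on them extends to an
associative homomorphism `Φ` with entries `ρ(eᵢᵢ) ρ(s) ρ(eⱼⱼ)`; multiplicativity uses a third index
and so at least three units.

A triple homomorphism `π` on `H(N,β)` gives the Jordan homomorphism `ρ x = π(1)* π(x)`, and
`π(1) Φ` is the extension of `π`.
-/

section AntiInvolution

variable {R A B ι : Type*} [CommRing R] [Ring A] [Algebra R A] [Ring B] [Algebra R B]

/-- `β` is an involutive linear antiautomorphism of `A`. The elements fixed by `β` are called
symmetric. -/
structure IsAntiInvolution (β : A →ₗ[R] A) : Prop where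
  map_mul (x y : A) : β (x * y) = β y * β x
  map_map (x : A) : β (β x) = x

/-- `e i j` is a system of matrix units of the whole algebra `A` which `β` transposes. -/
structure IsSymmMatrixUnits [Fintype ι] (β : A →ₗ[R] A) (e : ι → ι → A) : Prop where
  mul_same (i j k : ι) : e i j * e j k = e i k
  mul_of_ne (i l : ι) {j k : ι} (h : j ≠ k) : e i j * e k l = 0
  sum_diag : ∑ i, e i i = 1
  map (i j : ι) : β (e i j) = e j i

/-- `ρ` preserves the quadratic Jordan operations `x²` and `xyx` of symmetric elements. -/
structure IsJordanHomOnSymm (β : A →ₗ[R] A) (ρ : A →ₗ[R] B) : Prop where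
  map_sq {x : A} (hx : β x = x) : ρ (x * x) = ρ x * ρ x
  map_quad {x y : A} (hx : β x = x) (hy : β y = y) : ρ (x * y * x) = ρ x * ρ y * ρ x

namespace IsAntiInvolution

variable {β : A →ₗ[R] A}

lemma map_one (hβ : IsAntiInvolution β) : β 1 = 1 := by
  simpa only [one_mul, hβ.map_map] using (hβ.map_mul 1 (β 1)).symm

lemma map_add_map (hβ : IsAntiInvolution β) (x : A) : β (x + β x) = x + β x := by
  rw [map_add, hβ.map_map, add_comm]

end IsAntiInvolution

namespace IsSymmMatrixUnits

variable [Fintype ι] {β : A →ₗ[R] A} {e : ι → ι → A}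

lemma mul_same_assoc (he : IsSymmMatrixUnits β e) (i j k : ι) (x : A) :
    e i j * (e j k * x) = e i k * x := by
  rw [← mul_assoc, he.mul_same]

lemma mul_of_ne_assoc (he : IsSymmMatrixUnits β e) (i l : ι) {j k : ι} (h : j ≠ k) (x : A) :
    e i j * (e k l * x) = 0 := by
  rw [← mul_assoc, he.mul_of_ne i l h, zero_mul]

lemma map_corner (hβ : IsAntiInvolution β) (he : IsSymmMatrixUnits β e) (i j : ι) (x : A) :
    β (e i i * x * e j j) = e j j * β x * e i i := by
  rw [hβ.map_mul, hβ.map_mul, he.map, he.map, mul_assoc]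

lemma sum_sum_corner (he : IsSymmMatrixUnits β e) (x : A) :
    ∑ i, ∑ j, e i i * x * e j j = x := by
  simp only [← Finset.mul_sum, he.sum_diag, mul_one, ← Finset.sum_mul, one_mul]

theorem adjoin_symm_eq_top [Nontrivial ι] (hβ : IsAntiInvolution β)
    (he : IsSymmMatrixUnits β e) : Algebra.adjoin R {x : A | β x = x} = ⊤ := by
  set G := Algebra.adjoin R {x : A | β x = x}
  have symm_mem {x : A} (hx : β x = x) : x ∈ G := Algebra.subset_adjoin hx
  have offDiag_mem {i j : ι} (hij : i ≠ j) (x : A) : e i i * x * e j j ∈ G := by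
    have hz : e i i * x * e j j =
        e i i * (e i i * x * e j j + β (e i i * x * e j j)) * e j j := by
      rw [he.map_corner hβ]
      simp only [mul_add, mul_assoc, he.mul_same, he.mul_same_assoc,
        he.mul_of_ne_assoc _ _ hij, add_zero]
    rw [hz]
    exact mul_mem (mul_mem (symm_mem (he.map i i)) (symm_mem (hβ.map_add_map _)))
      (symm_mem (he.map j j))
  have corner_mem (i j : ι) (x : A) : e i i * x * e j j ∈ G := by
    rcases eq_or_ne i j with rfl | hij
    · obtain ⟨k, hk⟩ := exists_ne i
      have hz : e i i * x * e i i = e i i * (x * e i k) * e k k * (e k k * e k i * e i i) := by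
        simp only [mul_assoc, he.mul_same]
      rw [hz]
      exact mul_mem (offDiag_mem hk.symm _) (offDiag_mem hk _)
    · exact offDiag_mem hij x
  rw [eq_top_iff]
  intro x _
  rw [← he.sum_sum_corner x]
  exact sum_mem fun i _ => sum_mem fun j _ => corner_mem i j x

theorem induction_symm [Nontrivial ι] (hβ : IsAntiInvolution β) (he : IsSymmMatrixUnits β e)
    {p : A → Prop} (symm : ∀ x, β x = x → p x) (add : ∀ x y, p x → p y → p (x + y))
    (mul : ∀ x y, p x → p y → p (x * y)) (a : A) : p a := by
  have ha : a ∈ Algebra.adjoin R {x | β x = x} := by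
    rw [adjoin_symm_eq_top hβ he]
    exact Algebra.mem_top
  induction ha using Algebra.adjoin_induction with
  | mem x hx => exact symm x hx
  | algebraMap r => exact symm _ (by rw [Algebra.algebraMap_eq_smul_one, map_smul, hβ.map_one])
  | add x y _ _ hx hy => exact add x y hx hy
  | mul x y _ _ hx hy => exact mul x y hx hy

theorem map_star_of_symm [StarRing A] [StarRing B] [Nontrivial ι] (hβ : IsAntiInvolution β)
    (he : IsSymmMatrixUnits β e) (Φ : A →ₙₐ[R] B)
    (h : ∀ x, β x = x → Φ (star x) = star (Φ x)) (a : A) : Φ (star a) = star (Φ a) := by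
  induction a using he.induction_symm hβ with
  | symm x hx => exact h x hx
  | add x y hx hy => rw [star_add, map_add, map_add, star_add, hx, hy]
  | mul x y hx hy => rw [star_mul, map_mul, map_mul, star_mul, hx, hy]

end IsSymmMatrixUnits

namespace IsJordanHomOnSymm

variable {β : A →ₗ[R] A} {ρ : A →ₗ[R] B}

lemma map_mul_add_mul (hρ : IsJordanHomOnSymm β ρ) {x y : A} (hx : β x = x) (hy : β y = y) :
    ρ (x * y + y * x) = ρ x * ρ y + ρ y * ρ x := by
  have h := hρ.map_sq (x := x + y) (by rw [map_add, hx, hy])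
  have hexpand : (x + y) * (x + y) = x * x + y * y + (x * y + y * x) := by noncomm_ring
  rw [hexpand, map_add, map_add, hρ.map_sq hx, hρ.map_sq hy, map_add ρ x y] at h
  rw [← sub_eq_zero] at h ⊢
  rw [← h]
  noncomm_ring

lemma map_triple (hρ : IsJordanHomOnSymm β ρ) {x y z : A} (hx : β x = x) (hy : β y = y)
    (hz : β z = z) :
    ρ (x * y * z + z * y * x) = ρ x * ρ y * ρ z + ρ z * ρ y * ρ x := by
  have h := hρ.map_quad (x := x + z) (by rw [map_add, hx, hz]) hy
  have hexpand : (x + z) * y * (x + z) = x * y * x + z * y * z + (x * y * z + z * y * x) := by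
    noncomm_ring
  rw [hexpand, map_add, map_add, hρ.map_quad hx hy, hρ.map_quad hz hy, map_add ρ x z] at h
  rw [← sub_eq_zero] at h ⊢
  rw [← h]
  noncomm_ring

variable {p w : A}

lemma absorb (hρ : IsJordanHomOnSymm β ρ) (hβ : IsAntiInvolution β) (hp : β p = p)
    (hpp : p * p = p) (hw : β w = w) (h : p * w = w) : ρ p * ρ w = ρ w ∧ ρ w * ρ p = ρ w := by
  have hwp : w * p = w := by simpa only [hβ.map_mul, hp, hw] using congrArg β h
  have hρw : ρ w = ρ p * ρ w * ρ p := by rw [← hρ.map_quad hp hw, h, hwp]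
  have hρp : ρ p * ρ p = ρ p := by rw [← hρ.map_sq hp, hpp]
  constructor
  · rw [hρw, ← mul_assoc, ← mul_assoc, hρp]
  · rw [hρw, mul_assoc, hρp]

end IsJordanHomOnSymm

end AntiInvolution

section Extension

variable {R A B ι : Type*} [CommRing R] [Ring A] [Algebra R A] [Ring B] [Algebra R B]

/-- The symmetrization `s + β s` of the corner `s = eᵢᵢ x eⱼⱼ`. -/
def symmCorner (β : A →ₗ[R] A) (e : ι → ι → A) (i j : ι) : A →ₗ[R] A :=
  (LinearMap.id + β) ∘ₗ LinearMap.mulLeftRight R (e i i, e j j)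

/-- The `(i, j)` entry, for `i ≠ j`, of the multiplicative extension of a Jordan homomorphism
`ρ`: the corner `ρ(eᵢᵢ) ρ(s + β s) ρ(eⱼⱼ)` where `s = eᵢᵢ x eⱼⱼ`. -/
def offDiagEntry (β : A →ₗ[R] A) (ρ : A →ₗ[R] B) (e : ι → ι → A) (i j : ι) : A →ₗ[R] B :=
  LinearMap.mulLeftRight R (ρ (e i i), ρ (e j j)) ∘ₗ ρ ∘ₗ symmCorner β e i j

open Classical in
/-- The `(i, j)` entry of the multiplicative extension of a Jordan homomorphism `ρ`. A diagonal
entry is the product of the entries `(i, k)` of `x eᵢₖ` and `(k, i)` of `eₖᵢ` for some `k ≠ i`. -/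
def entry [Nontrivial ι] (β : A →ₗ[R] A) (ρ : A →ₗ[R] B) (e : ι → ι → A) (i j : ι) :
    A →ₗ[R] B :=
  if i = j then
    let k := (exists_ne i).choose
    LinearMap.mulRight R (offDiagEntry β ρ e k i (e k i)) ∘ₗ offDiagEntry β ρ e i k ∘ₗ
      LinearMap.mulRight R (e i k)
  else offDiagEntry β ρ e i j

variable {β : A →ₗ[R] A} {ρ : A →ₗ[R] B} {e : ι → ι → A}

lemma symmCorner_apply (i j : ι) (x : A) :
    symmCorner β e i j x = e i i * x * e j j + β (e i i * x * e j j) :=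
  rfl

lemma offDiagEntry_apply (i j : ι) (x : A) :
    offDiagEntry β ρ e i j x = ρ (e i i) * ρ (symmCorner β e i j x) * ρ (e j j) :=
  rfl

lemma entry_of_ne [Nontrivial ι] {i j : ι} (hij : i ≠ j) :
    entry β ρ e i j = offDiagEntry β ρ e i j :=
  if_neg hij

lemma IsAntiInvolution.map_symmCorner (hβ : IsAntiInvolution β) (i j : ι) (x : A) :
    β (symmCorner β e i j x) = symmCorner β e i j x :=
  hβ.map_add_map _

variable [Fintype ι] {i j k : ι}

namespace IsSymmMatrixUnits

lemma symmCorner_map (hβ : IsAntiInvolution β) (he : IsSymmMatrixUnits β e) (i j : ι) (x : A) :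
    symmCorner β e i j (β x) = symmCorner β e j i x := by
  rw [symmCorner_apply, symmCorner_apply, he.map_corner hβ, he.map_corner hβ, hβ.map_map,
    add_comm]

lemma symmCorner_unit (hβ : IsAntiInvolution β) (he : IsSymmMatrixUnits β e) (i j : ι) :
    symmCorner β e i j (e i j) = e i j + e j i := by
  rw [symmCorner_apply, he.map_corner hβ, he.map, he.mul_same, he.mul_same, he.mul_same,
    he.mul_same]

lemma symmCorner_mul_add_mul (hβ : IsAntiInvolution β) (he : IsSymmMatrixUnits β e)
    (hij : i ≠ j) (hjk : j ≠ k) (hik : i ≠ k) (x y : A) :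
    symmCorner β e i j x * symmCorner β e j k y + symmCorner β e j k y * symmCorner β e i j x =
      symmCorner β e i k (x * e j j * y) := by
  simp only [symmCorner_apply, he.map_corner hβ, hβ.map_mul, he.map]
  simp only [mul_add, add_mul, mul_assoc, he.mul_same_assoc, he.mul_of_ne_assoc _ _ hij,
    he.mul_of_ne_assoc _ _ hij.symm, he.mul_of_ne_assoc _ _ hjk, he.mul_of_ne_assoc _ _ hjk.symm,
    he.mul_of_ne_assoc _ _ hik, he.mul_of_ne_assoc _ _ hik.symm, mul_zero, add_zero, zero_add]

end IsSymmMatrixUnits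

namespace IsJordanHomOnSymm

lemma idem (he : IsSymmMatrixUnits β e) (hρ : IsJordanHomOnSymm β ρ) (i : ι) :
    ρ (e i i) * ρ (e i i) = ρ (e i i) := by
  rw [← hρ.map_sq (he.map i i), he.mul_same]

lemma add_absorb (hβ : IsAntiInvolution β) (he : IsSymmMatrixUnits β e)
    (hρ : IsJordanHomOnSymm β ρ) (hij : i ≠ j) {w : A} (hw : β w = w)
    (h : (e i i + e j j) * w = w) :
    (ρ (e i i) + ρ (e j j)) * ρ w = ρ w ∧ ρ w * (ρ (e i i) + ρ (e j j)) = ρ w := by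
  rw [← map_add]
  refine hρ.absorb hβ (by rw [map_add, he.map, he.map]) ?_ hw h
  simp only [mul_add, add_mul, he.mul_same, he.mul_of_ne _ _ hij, he.mul_of_ne _ _ hij.symm,
    add_zero, zero_add]

lemma orthogonal (hβ : IsAntiInvolution β) (he : IsSymmMatrixUnits β e)
    (hρ : IsJordanHomOnSymm β ρ) (hij : i ≠ j) : ρ (e i i) * ρ (e j j) = 0 := by
  have h := (hρ.add_absorb hβ he hij (he.map j j) (by
    rw [add_mul, he.mul_of_ne _ _ hij, he.mul_same, zero_add])).1
  rwa [add_mul, hρ.idem he, add_eq_right] at h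

lemma symmCorner_absorb (hβ : IsAntiInvolution β) (he : IsSymmMatrixUnits β e)
    (hρ : IsJordanHomOnSymm β ρ) (hij : i ≠ j) (x : A) :
    (ρ (e i i) + ρ (e j j)) * ρ (symmCorner β e i j x) = ρ (symmCorner β e i j x) ∧
      ρ (symmCorner β e i j x) * (ρ (e i i) + ρ (e j j)) = ρ (symmCorner β e i j x) := by
  refine hρ.add_absorb hβ he hij (hβ.map_symmCorner i j x) ?_
  rw [symmCorner_apply, he.map_corner hβ]
  simp only [mul_add, add_mul, mul_assoc, he.mul_same_assoc, he.mul_of_ne_assoc _ _ hij,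
    he.mul_of_ne_assoc _ _ hij.symm, add_zero, zero_add]

lemma mul_symmCorner_mul (hβ : IsAntiInvolution β) (he : IsSymmMatrixUnits β e)
    (hρ : IsJordanHomOnSymm β ρ) (hij : i ≠ j) (x : A) :
    ρ (e i i) * ρ (symmCorner β e i j x) * ρ (e i i) = 0 := by
  rw [← hρ.map_quad (he.map i i) (hβ.map_symmCorner i j x), symmCorner_apply,
    he.map_corner hβ]
  simp only [mul_add, mul_assoc, he.mul_of_ne _ _ hij.symm, he.mul_of_ne_assoc _ _ hij, mul_zero,
    add_zero, map_zero]

lemma mul_symmCorner (hβ : IsAntiInvolution β) (he : IsSymmMatrixUnits β e)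
    (hρ : IsJordanHomOnSymm β ρ) (hij : i ≠ j) (x : A) :
    ρ (e i i) * ρ (symmCorner β e i j x) = offDiagEntry β ρ e i j x := by
  rw [← (hρ.symmCorner_absorb hβ he hij x).2, mul_add, mul_add, ← mul_assoc, ← mul_assoc,
    hρ.mul_symmCorner_mul hβ he hij, zero_add, offDiagEntry_apply]

lemma symmCorner_mul (hβ : IsAntiInvolution β) (he : IsSymmMatrixUnits β e)
    (hρ : IsJordanHomOnSymm β ρ) (hij : i ≠ j) (x : A) :
    ρ (symmCorner β e i j x) * ρ (e j j) = offDiagEntry β ρ e i j x := by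
  have hcorner : ρ (e j j) * ρ (symmCorner β e i j x) * ρ (e j j) = 0 := by
    rw [← he.symmCorner_map hβ, hρ.mul_symmCorner_mul hβ he hij.symm]
  rw [← (hρ.symmCorner_absorb hβ he hij x).1, add_mul, add_mul, hcorner, add_zero,
    offDiagEntry_apply]

lemma mul_symmCorner_of_ne (hβ : IsAntiInvolution β) (he : IsSymmMatrixUnits β e)
    (hρ : IsJordanHomOnSymm β ρ) (hij : i ≠ j) (hjk : j ≠ k) (hik : i ≠ k) (x : A) :
    ρ (e i i) * ρ (symmCorner β e j k x) = 0 := by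
  rw [← (hρ.symmCorner_absorb hβ he hjk x).1, ← mul_assoc, mul_add, hρ.orthogonal hβ he hij,
    hρ.orthogonal hβ he hik, add_zero, zero_mul]

lemma offDiagEntry_mul_offDiagEntry (hβ : IsAntiInvolution β) (he : IsSymmMatrixUnits β e)
    (hρ : IsJordanHomOnSymm β ρ) (hij : i ≠ j) (hjk : j ≠ k) (hik : i ≠ k) (x y : A) :
    offDiagEntry β ρ e i j x * offDiagEntry β ρ e j k y =
      offDiagEntry β ρ e i k (x * e j j * y) := by
  rw [offDiagEntry_apply i k, ← he.symmCorner_mul_add_mul hβ hij hjk hik,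
    hρ.map_mul_add_mul (hβ.map_symmCorner i j x) (hβ.map_symmCorner j k y), mul_add,
    ← mul_assoc, ← mul_assoc, hρ.mul_symmCorner_of_ne hβ he hij hjk hik, zero_mul, add_zero,
    hρ.mul_symmCorner hβ he hij, mul_assoc, hρ.symmCorner_mul hβ he hjk]

lemma offDiagEntry_mul_unit (he : IsSymmMatrixUnits β e) (i j : ι) (x : A) :
    offDiagEntry β ρ e i j (x * e j j) = offDiagEntry β ρ e i j x := by
  simp only [offDiagEntry_apply, symmCorner_apply, mul_assoc, he.mul_same]

lemma offDiagEntry_of_symm (hβ : IsAntiInvolution β) (he : IsSymmMatrixUnits β e)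
    (hρ : IsJordanHomOnSymm β ρ) (hij : i ≠ j) {x : A} (hx : β x = x) :
    offDiagEntry β ρ e i j x = ρ (e i i) * ρ x * ρ (e j j) := by
  have hT := hρ.map_triple (he.map i i) hx (he.map j j)
  rw [offDiagEntry_apply, symmCorner_apply, he.map_corner hβ, hx, hT, mul_add, add_mul]
  simp only [← mul_assoc, hρ.idem he, hρ.orthogonal hβ he hij, zero_mul, add_zero]
  rw [mul_assoc _ (ρ (e j j)), hρ.idem he]

lemma offDiagEntry_unit_mul_offDiagEntry_unit (hβ : IsAntiInvolution β)
    (he : IsSymmMatrixUnits β e) (hρ : IsJordanHomOnSymm β ρ) (hij : i ≠ j) :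
    offDiagEntry β ρ e i j (e i j) * offDiagEntry β ρ e j i (e j i) = ρ (e i i) := by
  have hsymm : symmCorner β e j i (e j i) = symmCorner β e i j (e i j) := by
    rw [he.symmCorner_unit hβ, he.symmCorner_unit hβ, add_comm]
  have hsq : symmCorner β e i j (e i j) * symmCorner β e i j (e i j) = e i i + e j j := by
    rw [he.symmCorner_unit hβ]
    simp only [mul_add, add_mul, he.mul_same, he.mul_of_ne _ _ hij, he.mul_of_ne _ _ hij.symm,
      zero_add, add_zero]
    rw [add_comm]
  rw [← hρ.mul_symmCorner hβ he hij, ← hρ.symmCorner_mul hβ he hij.symm, hsymm, mul_assoc,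
    ← mul_assoc (ρ (symmCorner β e i j (e i j))), ← hρ.map_sq (hβ.map_symmCorner i j _), hsq,
    map_add, add_mul, hρ.idem he, hρ.orthogonal hβ he hij.symm, add_zero, hρ.idem he]

lemma offDiagEntry_mul_unit_of_symm (hβ : IsAntiInvolution β) (he : IsSymmMatrixUnits β e)
    (hρ : IsJordanHomOnSymm β ρ) (hij : i ≠ j) {x : A} (hx : β x = x) :
    offDiagEntry β ρ e i j (x * e i j) =
      ρ (e i i) * ρ x * ρ (e i i) * offDiagEntry β ρ e i j (e i j) := by
  have ha : β (e i i * x * e i i) = e i i * x * e i i := by rw [he.map_corner hβ, hx]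
  have hs : symmCorner β e i j (x * e i j) =
      (e i i * x * e i i) * symmCorner β e i j (e i j) +
        symmCorner β e i j (e i j) * (e i i * x * e i i) := by
    rw [symmCorner_apply, he.symmCorner_unit hβ, he.map_corner hβ, hβ.map_mul, hx, he.map]
    simp only [mul_add, add_mul, mul_assoc, he.mul_same, he.mul_same_assoc,
      he.mul_of_ne _ _ hij, he.mul_of_ne_assoc _ _ hij.symm, mul_zero, add_zero, zero_add]
  have hcorner := hρ.mul_symmCorner_mul hβ he hij (e i j)
  rw [← hρ.mul_symmCorner hβ he hij, hs,
    hρ.map_mul_add_mul ha (hβ.map_symmCorner i j _), hρ.map_quad (he.map i i) hx,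
    ← hρ.mul_symmCorner hβ he hij]
  simp only [mul_add, ← mul_assoc, hρ.idem he, hcorner, zero_mul, add_zero]
  rw [mul_assoc _ (ρ (e i i)) (ρ (e i i)), hρ.idem he]

section Entry

variable [Nontrivial ι]

lemma entry_self (hβ : IsAntiInvolution β) (he : IsSymmMatrixUnits β e)
    (hρ : IsJordanHomOnSymm β ρ) (hik : i ≠ k) (x : A) :
    entry β ρ e i i x =
      offDiagEntry β ρ e i k (x * e i k) * offDiagEntry β ρ e k i (e k i) := by
  set l := (exists_ne i).choose with hl
  have hil : i ≠ l := (exists_ne i).choose_spec.symm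
  have hentry : entry β ρ e i i x =
      offDiagEntry β ρ e i l (x * e i l) * offDiagEntry β ρ e l i (e l i) := by
    simp only [entry, if_true, LinearMap.comp_apply, LinearMap.mulRight_apply, ← hl]
  rcases eq_or_ne l k with hlk | hlk
  · rw [hentry, hlk]
  have hli : offDiagEntry β ρ e l i (e l i) =
      offDiagEntry β ρ e l k (e l k) * offDiagEntry β ρ e k i (e k i) := by
    rw [hρ.offDiagEntry_mul_offDiagEntry hβ he hlk hik.symm hil.symm, he.mul_same, he.mul_same]
  rw [hentry, hli, ← mul_assoc, hρ.offDiagEntry_mul_offDiagEntry hβ he hil hlk hik]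
  simp only [mul_assoc, he.mul_same]

lemma entry_mul_unit (hβ : IsAntiInvolution β) (he : IsSymmMatrixUnits β e)
    (hρ : IsJordanHomOnSymm β ρ) (i j : ι) (x : A) :
    entry β ρ e i j (x * e j j) = entry β ρ e i j x := by
  rcases eq_or_ne i j with rfl | hij
  · obtain ⟨k, hk⟩ := exists_ne i
    rw [hρ.entry_self hβ he hk.symm, hρ.entry_self hβ he hk.symm, mul_assoc x, he.mul_same]
  · rw [entry_of_ne hij, offDiagEntry_mul_unit he]

lemma entry_mul_idem (hβ : IsAntiInvolution β) (he : IsSymmMatrixUnits β e)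
    (hρ : IsJordanHomOnSymm β ρ) (i j : ι) (x : A) :
    entry β ρ e i j x * ρ (e j j) = entry β ρ e i j x := by
  rcases eq_or_ne i j with rfl | hij
  · obtain ⟨k, hk⟩ := exists_ne i
    rw [hρ.entry_self hβ he hk.symm, offDiagEntry_apply k i]
    simp only [mul_assoc, hρ.idem he]
  · rw [entry_of_ne hij, offDiagEntry_apply, mul_assoc, hρ.idem he]

lemma idem_mul_entry (hβ : IsAntiInvolution β) (he : IsSymmMatrixUnits β e)
    (hρ : IsJordanHomOnSymm β ρ) (i j : ι) (x : A) :
    ρ (e i i) * entry β ρ e i j x = entry β ρ e i j x := by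
  rcases eq_or_ne i j with rfl | hij
  · obtain ⟨k, hk⟩ := exists_ne i
    rw [hρ.entry_self hβ he hk.symm, offDiagEntry_apply i k]
    simp only [← mul_assoc, hρ.idem he]
  · rw [entry_of_ne hij, offDiagEntry_apply, ← mul_assoc, ← mul_assoc, hρ.idem he]

lemma entry_self_mul_entry (hβ : IsAntiInvolution β) (he : IsSymmMatrixUnits β e)
    (hρ : IsJordanHomOnSymm β ρ) (hij : i ≠ j) (hjk : j ≠ k) (hik : i ≠ k) (x y : A) :
    entry β ρ e i i x * entry β ρ e i j y = entry β ρ e i j (x * e i i * y) := by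
  rw [hρ.entry_self hβ he hik, entry_of_ne hij, mul_assoc,
    hρ.offDiagEntry_mul_offDiagEntry hβ he hik.symm hij hjk.symm,
    hρ.offDiagEntry_mul_offDiagEntry hβ he hik hjk.symm hij]
  simp only [mul_assoc, he.mul_same_assoc]

lemma entry_mul_entry_symm (hβ : IsAntiInvolution β) (he : IsSymmMatrixUnits β e)
    (hρ : IsJordanHomOnSymm β ρ) (hij : i ≠ j) (hjk : j ≠ k) (hik : i ≠ k) (x y : A) :
    entry β ρ e i j x * entry β ρ e j i y = entry β ρ e i i (x * e j j * y) := by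
  have hfactor : offDiagEntry β ρ e j i y =
      offDiagEntry β ρ e j k (y * e i k) * offDiagEntry β ρ e k i (e k i) := by
    rw [hρ.offDiagEntry_mul_offDiagEntry hβ he hjk hik.symm hij.symm]
    simp only [mul_assoc, he.mul_same]
    rw [offDiagEntry_mul_unit he]
  rw [hρ.entry_self hβ he hik, entry_of_ne hij, entry_of_ne hij.symm, hfactor, ← mul_assoc,
    hρ.offDiagEntry_mul_offDiagEntry hβ he hij hjk hik, mul_assoc (x * e j j)]

lemma entry_mul_entry_of_ne (hβ : IsAntiInvolution β) (he : IsSymmMatrixUnits β e)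
    (hρ : IsJordanHomOnSymm β ρ) (hι : 2 < Fintype.card ι) (i : ι) (hjk : j ≠ k) (x y : A) :
    entry β ρ e i j x * entry β ρ e j k y = entry β ρ e i k (x * e j j * y) := by
  obtain ⟨l, hlj, hlk⟩ : ∃ l, l ≠ j ∧ l ≠ k :=
    ENat.exists_ne_ne_of_three_le (by
      rw [ENat.card_eq_coe_fintype_card]; exact_mod_cast hι) j k
  rcases eq_or_ne i j with rfl | hij
  · exact hρ.entry_self_mul_entry hβ he hjk hlk.symm hlj.symm x y
  rcases eq_or_ne i k with rfl | hik
  · exact hρ.entry_mul_entry_symm hβ he hij hlj.symm hlk.symm x y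
  · rw [entry_of_ne hij, entry_of_ne hjk, entry_of_ne hik,
      hρ.offDiagEntry_mul_offDiagEntry hβ he hij hjk hik]

theorem entry_mul_entry (hβ : IsAntiInvolution β) (he : IsSymmMatrixUnits β e)
    (hρ : IsJordanHomOnSymm β ρ) (hι : 2 < Fintype.card ι) (i j k : ι) (x y : A) :
    entry β ρ e i j x * entry β ρ e j k y = entry β ρ e i k (x * e j j * y) := by
  rcases eq_or_ne j k with rfl | hjk
  · obtain ⟨k, hk⟩ := exists_ne j
    rw [hρ.entry_self hβ he hk.symm, ← entry_of_ne hk.symm, ← entry_of_ne hk, ← mul_assoc,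
      hρ.entry_mul_entry_of_ne hβ he hι i hk.symm, hρ.entry_mul_entry_of_ne hβ he hι i hk,
      ← hρ.entry_mul_unit hβ he i j (_ * y)]
    simp only [mul_assoc, he.mul_same]
  · exact hρ.entry_mul_entry_of_ne hβ he hι i hjk x y

lemma entry_mul_entry_eq_zero (hβ : IsAntiInvolution β) (he : IsSymmMatrixUnits β e)
    (hρ : IsJordanHomOnSymm β ρ) (i l : ι) (hjk : j ≠ k) (x y : A) :
    entry β ρ e i j x * entry β ρ e k l y = 0 := by
  rw [← hρ.entry_mul_idem hβ he, ← hρ.idem_mul_entry hβ he k l, mul_assoc,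
    ← mul_assoc (ρ (e j j)), hρ.orthogonal hβ he hjk, zero_mul, mul_zero]

lemma entry_mul (hβ : IsAntiInvolution β) (he : IsSymmMatrixUnits β e)
    (hρ : IsJordanHomOnSymm β ρ) (hι : 2 < Fintype.card ι) (i k : ι) (x y : A) :
    entry β ρ e i k (x * y) = ∑ j, entry β ρ e i j x * entry β ρ e j k y := by
  simp only [hρ.entry_mul_entry hβ he hι, ← map_sum, ← Finset.sum_mul, ← Finset.mul_sum,
    he.sum_diag, mul_one]

lemma entry_mul_sum_sum (hβ : IsAntiInvolution β) (he : IsSymmMatrixUnits β e)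
    (hρ : IsJordanHomOnSymm β ρ) (i j : ι) (x y : A) :
    entry β ρ e i j x * ∑ k, ∑ l, entry β ρ e k l y =
      ∑ l, entry β ρ e i j x * entry β ρ e j l y := by
  rw [Finset.mul_sum, Finset.sum_eq_single j, Finset.mul_sum]
  · intro k _ hk
    rw [Finset.mul_sum]
    exact Finset.sum_eq_zero fun l _ => hρ.entry_mul_entry_eq_zero hβ he i l hk.symm x y
  · exact fun hj => absurd (Finset.mem_univ j) hj

lemma entry_of_symm (hβ : IsAntiInvolution β) (he : IsSymmMatrixUnits β e)
    (hρ : IsJordanHomOnSymm β ρ) (i j : ι) {x : A} (hx : β x = x) :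
    entry β ρ e i j x = ρ (e i i) * ρ x * ρ (e j j) := by
  rcases eq_or_ne i j with rfl | hij
  · obtain ⟨k, hk⟩ := exists_ne i
    rw [hρ.entry_self hβ he hk.symm, hρ.offDiagEntry_mul_unit_of_symm hβ he hk.symm hx,
      mul_assoc, hρ.offDiagEntry_unit_mul_offDiagEntry_unit hβ he hk.symm, mul_assoc,
      hρ.idem he]
  · rw [entry_of_ne hij, hρ.offDiagEntry_of_symm hβ he hij hx]

end Entry

theorem exists_nonUnitalAlgHom (hβ : IsAntiInvolution β) (he : IsSymmMatrixUnits β e)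
    (hρ : IsJordanHomOnSymm β ρ) (hι : 2 < Fintype.card ι) :
    ∃ Φ : A →ₙₐ[R] B, ∀ x, β x = x → Φ x = ρ x := by
  have : Nontrivial ι := Fintype.one_lt_card_iff_nontrivial.1 (by omega)
  let Φ : A →ₗ[R] B := ∑ i, ∑ j, entry β ρ e i j
  have hΦ (x : A) : Φ x = ∑ i, ∑ j, entry β ρ e i j x := by
    simp only [Φ, LinearMap.sum_apply]
  have hmul (x y : A) : Φ (x * y) = Φ x * Φ y := by
    simp only [hΦ, hρ.entry_mul hβ he hι, Finset.sum_mul, hρ.entry_mul_sum_sum hβ he]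
    exact Finset.sum_congr rfl fun i _ => Finset.sum_comm
  refine ⟨{ Φ with map_zero' := map_zero Φ, map_mul' := hmul }, fun x hx => ?_⟩
  have hone : ∑ i, ρ (e i i) = ρ 1 := by rw [← map_sum, he.sum_diag]
  have h1 := hρ.absorb hβ hβ.map_one (mul_one 1) hx (one_mul x)
  change Φ x = ρ x
  simp only [hΦ, hρ.entry_of_symm hβ he _ _ hx, ← Finset.mul_sum, ← Finset.sum_mul, hone]
  rw [h1.1, h1.2]

end IsJordanHomOnSymm

end Extension

section StarAntiInvolution

variable {R A : Type*} [CommRing R] [Ring A] [StarRing A] [Algebra R A]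

/-- `β` is an involutive linear *-antiautomorphism of `A`. -/
structure IsStarAntiInvolution (β : A →ₗ[R] A) : Prop extends IsAntiInvolution β where
  map_star (x : A) : β (star x) = star (β x)

/-- `p` is the left support projection of `S`: the smallest projection with `p * a = a` for all
`a ∈ S`, encoded through the left annihilator of `S`. -/
structure IsLeftSupport (S : Set A) (p : A) : Prop where
  isStarProjection : IsStarProjection p
  mul_eq_zero_iff (y : A) : y * p = 0 ↔ ∀ a ∈ S, y * a = 0

namespace IsStarAntiInvolution

variable {β : A →ₗ[R] A}

lemma isSelfAdjoint (hβ : IsStarAntiInvolution β) {a : A} (ha : IsSelfAdjoint a) :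
    IsSelfAdjoint (β a) := by
  rw [IsSelfAdjoint, ← hβ.map_star, ha.star_eq]

lemma isStarProjection (hβ : IsStarAntiInvolution β) {p : A} (hp : IsStarProjection p) :
    IsStarProjection (β p) where
  isIdempotentElem := by rw [IsIdempotentElem, ← hβ.map_mul, hp.isIdempotentElem.eq]
  isSelfAdjoint := hβ.isSelfAdjoint hp.isSelfAdjoint

end IsStarAntiInvolution

namespace IsLeftSupport

variable {S : Set A} {p q a : A}

lemma mul_eq_mul_iff (hp : IsLeftSupport S p) {x y : A} :
    x * p = y * p ↔ ∀ a ∈ S, x * a = y * a := by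
  rw [← sub_eq_zero, ← sub_mul, hp.mul_eq_zero_iff]
  exact forall₂_congr fun a _ => by rw [sub_mul, sub_eq_zero]

lemma mul_left (hp : IsLeftSupport S p) (ha : a ∈ S) : p * a = a := by
  have h : p * p = 1 * p := by rw [hp.isStarProjection.isIdempotentElem.eq, one_mul]
  rw [hp.mul_eq_mul_iff.1 h a ha, one_mul]

lemma mul_eq_self (hp : IsLeftSupport S p) {q : A} (hq : ∀ a ∈ S, q * a = a) : q * p = p := by
  have h : q * p = 1 * p := hp.mul_eq_mul_iff.2 fun a ha => by rw [hq a ha, one_mul]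
  rw [h, one_mul]

lemma commute (hp : IsLeftSupport S p) {y : A} (hy : ∀ a ∈ S, Commute y a)
    (hy' : ∀ a ∈ S, Commute (star y) a) : Commute y p := by
  have absorb {z : A} (hz : ∀ a ∈ S, Commute z a) : p * z * p = z * p :=
    hp.mul_eq_mul_iff.2 fun a ha => by
      rw [mul_assoc, (hz a ha).eq, ← mul_assoc, hp.mul_left ha]
  have h := congrArg star (absorb hy')
  simp only [star_mul, star_star, hp.isStarProjection.isSelfAdjoint.star_eq] at h
  rw [Commute, SemiconjBy, ← absorb hy, mul_assoc, h]

lemma unique (hp : IsLeftSupport S p) (hq : IsLeftSupport S q) : p = q := by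
  have hpq : p * q = q := hq.mul_eq_self fun a ha => hp.mul_left ha
  have hqp : q * p = p := hp.mul_eq_self fun a ha => hq.mul_left ha
  simpa only [star_mul, hp.isStarProjection.isSelfAdjoint.star_eq,
    hq.isStarProjection.isSelfAdjoint.star_eq, hqp] using congrArg star hpq

lemma image {β : A →ₗ[R] A} (hβ : IsStarAntiInvolution β) (hS : ∀ a ∈ S, IsSelfAdjoint a)
    (hp : IsLeftSupport S p) : IsLeftSupport (β '' S) (β p) where
  isStarProjection := hβ.isStarProjection hp.isStarProjection
  mul_eq_zero_iff y := by
    have hzero (x : A) : β x = 0 ↔ x = 0 :=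
      ⟨fun h => by rw [← hβ.map_map x, h, map_zero], fun h => by rw [h, map_zero]⟩
    have hflip {a : A} (ha : IsSelfAdjoint a) : y * β a = 0 ↔ star (β y) * a = 0 := by
      rw [← hzero, hβ.map_mul, hβ.map_map, ← star_eq_zero, star_mul, ha.star_eq]
    rw [hflip hp.isStarProjection.isSelfAdjoint, hp.mul_eq_zero_iff, Set.forall_mem_image]
    exact forall₂_congr fun a ha => (hflip (hS a ha)).symm

end IsLeftSupport

end StarAntiInvolution

section FunctionalCalculus

variable {A : Type*} [CStarAlgebra A] {β : A →ₗ[ℂ] A}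

namespace IsStarAntiInvolution

open scoped CStarAlgebra in
/-- On a commutative *-subalgebra an antihomomorphism is a homomorphism. -/
lemma map_cfc (hβ : IsStarAntiInvolution β) {a : A} (ha : IsSelfAdjoint a) (f : ℝ → ℝ)
    (hf : Continuous f) : β (cfc f a) = cfc f (β a) := by
  let C := StarAlgebra.elemental ℂ a
  have : IsClosed (C : Set A) := StarAlgebra.elemental.isClosed ℂ a
  have : IsStarNormal a := ha.isStarNormal
  let ψ : C →⋆ₐ[ℂ] A :=
    { β ∘ₗ C.subtype.toLinearMap with
      map_one' := hβ.map_one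
      map_mul' := fun x y => (congrArg (fun z : C => β z) (mul_comm x y)).trans (hβ.map_mul y x)
      map_zero' := map_zero β
      commutes' := fun r => by
        change β (algebraMap ℂ A r) = algebraMap ℂ A r
        rw [Algebra.algebraMap_eq_smul_one, map_smul, hβ.map_one]
      map_star' := fun x => hβ.map_star x }
  let x : C := ⟨a, StarAlgebra.elemental.self_mem ℂ a⟩
  have hx : IsSelfAdjoint x := Subtype.ext ha
  have hcoe : ((cfc f x : C) : A) = cfc f a := C.subtype.map_cfc f x
  rw [← hcoe]
  exact ψ.map_cfc f x hf.continuousOn (map_continuous ψ) hx (hβ.isSelfAdjoint ha)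

end IsStarAntiInvolution
end FunctionalCalculus

/-- Every single element of `A` has a left support projection, that is, `A` is a Rickart *-ring. -/
def IsRickart (A : Type*) [Ring A] [StarRing A] : Prop :=
  ∀ a : A, ∃ p, IsLeftSupport {a} p

/-- `A` has no nonzero projection `q` with `q A q` commutative. -/
def HasNoAbelianProjection (A : Type*) [Ring A] [StarRing A] : Prop :=
  ∀ q : A, IsStarProjection q → (∀ x y, Commute (q * x * q) (q * y * q)) → q = 0

section SpectralProjections

variable {A : Type*} [CStarAlgebra A]

namespace IsRickart

/-- `q` is the support of the positive part of `b`. -/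
lemma exists_sign (hA : IsRickart A) {T : Set A} {b : A} (hb : IsSelfAdjoint b)
    (hbT : b ∈ Subalgebra.centralizer ℂ T) :
    ∃ q ∈ Subalgebra.centralizer ℂ T, IsStarProjection q ∧
      (2 * q - 1) * b = cfc (fun t : ℝ => |t|) b := by
  set b₁ := cfc (fun t : ℝ => max t 0) b
  set b₂ := cfc (fun t : ℝ => max (-t) 0) b
  obtain ⟨q, hq⟩ := hA b₁
  have hb₂₁ : b₂ * b₁ = 0 := by
    rw [← cfc_mul .., ← cfc_zero ℝ b]
    refine cfc_congr fun t _ => ?_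
    rcases le_total t 0 with ht | ht <;> simp [ht]
  have hsub : b = b₁ - b₂ := calc
    b = cfc (fun t : ℝ => t) b := (cfc_id' ℝ b).symm
    _ = b₁ - b₂ := by
      rw [← cfc_sub ..]
      exact cfc_congr fun t _ => (max_zero_sub_max_neg_zero_eq_self t).symm
  have habs : cfc (fun t : ℝ => |t|) b = b₁ + b₂ := by
    rw [← cfc_add ..]
    exact cfc_congr fun t _ => (max_zero_add_max_neg_zero_eq_abs_self t).symm
  have hqb₁ : q * b₁ = b₁ := hq.mul_left rfl
  have hqb₂ : q * b₂ = 0 := by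
    have h : b₂ * q = 0 := (hq.mul_eq_zero_iff _).2 (by simpa using hb₂₁)
    have hb₂ : IsSelfAdjoint b₂ := cfc_predicate _ b
    simpa only [star_mul, hb₂.star_eq, hq.isStarProjection.isSelfAdjoint.star_eq, star_zero]
      using congrArg star h
  refine ⟨q, fun y hy => ?_, hq.isStarProjection, ?_⟩
  · have hyb : Commute b y := (hbT y hy).symm
    have hyb' : Commute b (star y) := by simpa only [hb.star_eq] using hyb.star_star
    exact hq.commute (by simpa using (hyb.cfc_real _).symm) (by simpa using (hyb'.cfc_real _).symm)
  · rw [habs, hsub, sub_mul, mul_assoc, mul_sub, hqb₁, hqb₂]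
    noncomm_ring

lemma exists_norm_sub_le (hA : IsRickart A) {T : Set A} (n : ℕ) {b : A} (hb : IsSelfAdjoint b)
    (hbT : b ∈ Subalgebra.centralizer ℂ T) (hb1 : ‖b‖ ≤ 1) :
    ∃ v ∈ Submodule.span ℂ {q | IsStarProjection q ∧ q ∈ Subalgebra.centralizer ℂ T},
      ‖b - v‖ ≤ (1 / 2) ^ n := by
  induction n generalizing b with
  | zero => exact ⟨0, zero_mem _, by simpa using hb1⟩
  | succ n ih =>
    obtain ⟨q, hqT, hq, hqb⟩ := hA.exists_sign hb hbT
    have hs : IsSelfAdjoint (2 * q - 1) := by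
      rw [two_mul]
      exact (hq.isSelfAdjoint.add hq.isSelfAdjoint).sub (.one A)
    have hsT : 2 * q - 1 ∈ Subalgebra.centralizer ℂ T := by
      rw [two_mul]
      exact sub_mem (add_mem hqT hqT) (one_mem _)
    -- The signs `2 * q - 1` are the digits of a binary expansion of `b`; this is the remainder.
    have hr : b + b - (2 * q - 1) = (2 * q - 1) * cfc (fun t : ℝ => 2 * |t| - 1) b := by
      have hss : (2 * q - 1) * (2 * q - 1) = 1 := by
        simpa only [hs.star_eq] using (Unitary.mem_iff.1 hq.two_mul_sub_one_mem_unitary).1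
      rw [cfc_sub .., cfc_const_mul .., cfc_const_one ℝ b, mul_sub, mul_smul_comm, ← hqb,
        ← mul_assoc, hss, one_mul, mul_one, two_smul]
    have hr1 : ‖b + b - (2 * q - 1)‖ ≤ 1 := by
      rw [hr, CStarRing.norm_mem_unitary_mul _ hq.two_mul_sub_one_mem_unitary]
      refine norm_cfc_le zero_le_one fun t ht => ?_
      have ht1 : |t| ≤ 1 := calc
        |t| ≤ ‖cfc (fun t : ℝ => t) b‖ := norm_apply_le_norm_cfc (fun t : ℝ => t) b ht
        _ = ‖b‖ := by rw [cfc_id' ℝ b]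
        _ ≤ 1 := hb1
      exact abs_le.2 ⟨by linarith [abs_nonneg t], by linarith⟩
    obtain ⟨v, hv, hvn⟩ := ih (b := b + b - (2 * q - 1))
      ((hb.add hb).sub hs) (sub_mem (add_mem hbT hbT) hsT) hr1
    refine ⟨(2 : ℝ)⁻¹ • (2 * q - 1 + v), Submodule.smul_of_tower_mem _ _ (add_mem ?_ hv), ?_⟩
    · rw [two_mul]
      exact sub_mem (add_mem (Submodule.subset_span ⟨hq, hqT⟩) (Submodule.subset_span ⟨hq, hqT⟩))
        (Submodule.subset_span ⟨.one A, one_mem _⟩)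
    · have h : b - (2 : ℝ)⁻¹ • (2 * q - 1 + v) = (2 : ℝ)⁻¹ • (b + b - (2 * q - 1) - v) := by
        module
      rw [h, norm_smul, pow_succ', norm_inv, Real.norm_two, one_div]
      rw [one_div] at hvn
      gcongr

theorem mem_closure_span_projections (hA : IsRickart A) {T : Set A} {b : A}
    (hb : IsSelfAdjoint b) (hbT : b ∈ Subalgebra.centralizer ℂ T) :
    b ∈ (Submodule.span ℂ
      {q | IsStarProjection q ∧ q ∈ Subalgebra.centralizer ℂ T}).topologicalClosure := by
  set V := Submodule.span ℂ {q | IsStarProjection q ∧ q ∈ Subalgebra.centralizer ℂ T}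
  have hball {a : A} (ha : IsSelfAdjoint a) (haT : a ∈ Subalgebra.centralizer ℂ T)
      (ha1 : ‖a‖ ≤ 1) : a ∈ V.topologicalClosure := by
    refine Metric.mem_closure_iff.2 fun ε hε => ?_
    obtain ⟨n, hn⟩ := exists_pow_lt_of_lt_one hε (by norm_num : (1 / 2 : ℝ) < 1)
    obtain ⟨v, hv, hvn⟩ := hA.exists_norm_sub_le n ha haT ha1
    exact ⟨v, hv, (dist_eq_norm a v).trans_lt (hvn.trans_lt hn)⟩
  have hscale : ‖(‖b‖⁻¹ : ℝ) • b‖ ≤ 1 := by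
    rw [norm_smul, norm_inv, norm_norm]
    exact inv_mul_le_one
  have hmem := Submodule.smul_of_tower_mem _ ‖b‖ (hball (.smul (.all _) hb)
    (Submodule.smul_of_tower_mem (Subalgebra.toSubmodule (Subalgebra.centralizer ℂ T)) _ hbT)
    hscale)
  rcases eq_or_ne b 0 with rfl | hb0
  · exact zero_mem _
  · rwa [smul_inv_smul₀ (norm_ne_zero_iff.2 hb0)] at hmem

end IsRickart

lemma mem_of_isSelfAdjoint_corner {e : A} (he : IsSelfAdjoint e) (V : Submodule ℂ A)
    (hV : ∀ a, IsSelfAdjoint a → e * a * e = a → a ∈ V) {x : A} (hx : e * x * e = x) : x ∈ V := by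
  have hx' : e * star x * e = star x := by
    simpa only [star_mul, he.star_eq, mul_assoc] using congrArg star hx
  rw [← realPart_add_I_smul_imaginaryPart x]
  refine add_mem (hV _ (realPart x).2 ?_) (V.smul_mem _ (hV _ (imaginaryPart x).2 ?_))
  · rw [realPart_apply_coe, mul_smul_comm, smul_mul_assoc, mul_add, add_mul, hx, hx']
  · rw [imaginaryPart_apply_coe]
    simp only [mul_smul_comm, smul_mul_assoc, mul_sub, sub_mul, hx, hx']

lemma commute_projection_of_corner_reduced {A : Type*} [Ring A] [StarRing A] {e q y : A}
    (he : IsStarProjection e) (hnil : ∀ z, e * z * e = z → z * z = 0 → z = 0)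
    (hq : IsStarProjection q) (hqe : Commute e q) (hy : e * y * e = y) : Commute q y := by
  have absorb {y : A} (hy : e * y * e = y) : q * y * q = q * y := by
    have h : q * y * (1 - q) = 0 := by
      have hey : e * y = y := by rw [← hy, ← mul_assoc, ← mul_assoc, he.isIdempotentElem.eq]
      have hye : y * e = y := by rw [← hy, mul_assoc, he.isIdempotentElem.eq]
      refine hnil _ ?_ ?_
      · have hqe' : (1 - q) * e = e * (1 - q) := ((Commute.one_right e).sub_right hqe).eq.symm
        rw [← mul_assoc, ← mul_assoc, hqe.eq, mul_assoc q, hey, mul_assoc, hqe', ← mul_assoc,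
          mul_assoc q, hye]
      · rw [mul_assoc (q * y), mul_assoc q y (1 - q), ← mul_assoc (1 - q),
          hq.isIdempotentElem.one_sub_mul_self, zero_mul, mul_zero]
    rwa [mul_sub, mul_one, sub_eq_zero, eq_comm] at h
  have hy' : e * star y * e = star y := by
    simpa only [star_mul, he.isSelfAdjoint.star_eq, mul_assoc] using congrArg star hy
  have h := congrArg star (absorb hy')
  simp only [star_mul, star_star, hq.isSelfAdjoint.star_eq] at h
  rw [Commute, SemiconjBy, ← absorb hy, mul_assoc, h]

theorem commute_corner_of_reduced (hA : IsRickart A) {e : A} (he : IsStarProjection e)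
    (hnil : ∀ z, e * z * e = z → z * z = 0 → z = 0) (x y : A) :
    Commute (e * x * e) (e * y * e) := by
  have hee (a : A) : e * (e * a * e) * e = e * a * e := by
    simp only [mul_assoc, he.isIdempotentElem.eq]
    simp only [← mul_assoc, he.isIdempotentElem.eq]
  let V : Submodule ℂ A := Subalgebra.toSubmodule (Subalgebra.centralizer ℂ {e * y * e})
  have hV : IsClosed (V : Set A) := Set.isClosed_centralizer {e * y * e}
  have hx : e * x * e ∈ V := by
    refine mem_of_isSelfAdjoint_corner he.isSelfAdjoint V (fun a ha hea => ?_) (hee x)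
    have haT : a ∈ Subalgebra.centralizer ℂ {e} := by
      rintro _ rfl
      rw [← hea]
      simp only [← mul_assoc, he.isIdempotentElem.eq]
      simp only [mul_assoc, he.isIdempotentElem.eq]
    refine Submodule.topologicalClosure_minimal _ (Submodule.span_le.2 ?_) hV
      (hA.mem_closure_span_projections ha haT)
    rintro q ⟨hq, hqT⟩ _ rfl
    exact (commute_projection_of_corner_reduced he hnil hq (hqT e rfl) (hee y)).symm
  exact (hx _ rfl).symm

theorem HasNoAbelianProjection.exists_sq_eq_zero (hA : IsRickart A) (hN : HasNoAbelianProjection A)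
    {e : A} (he : IsStarProjection e) (he0 : e ≠ 0) : ∃ z ≠ 0, e * z * e = z ∧ z * z = 0 := by
  by_contra! h
  refine he0 (hN e he (commute_corner_of_reduced hA he fun z hz hzz => ?_))
  by_contra hz0
  exact h z hz0 hz hzz

end SpectralProjections

section SquareZeroPartialIsometry

variable {A : Type*} [CStarAlgebra A] {β : A →ₗ[ℂ] A} {p : A}

lemma IsStarAntiInvolution.exists_skew (hβ : IsStarAntiInvolution β)
    (hN : HasNoAbelianProjection A) (hp : IsStarProjection p) (hβp : β p = p) (hp0 : p ≠ 0) :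
    ∃ k ≠ 0, IsSelfAdjoint k ∧ β k = -k ∧ p * k = k := by
  by_contra! h
  have symm {x : A} (hx : p * x * p = x) : x ∈ LinearMap.eqLocus β LinearMap.id := by
    refine mem_of_isSelfAdjoint_corner hp.isSelfAdjoint _ (fun a ha hpa => ?_) hx
    have hpa' : p * a = a := by
      rw [← hpa, ← mul_assoc, ← mul_assoc, hp.isIdempotentElem.eq]
    have hpβa : p * β a = β a := by
      rw [← hpa, hβ.map_mul, hβp, ← mul_assoc, hp.isIdempotentElem.eq]
    have hk : a - β a = 0 := by
      by_contra hk
      exact h _ hk (ha.sub (hβ.isSelfAdjoint ha)) (by rw [map_sub, hβ.map_map, neg_sub])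
        (by rw [mul_sub, hpa', hpβa])
    exact (sub_eq_zero.1 hk).symm
  have corner (x : A) : p * (p * x * p) * p = p * x * p := by
    simp only [mul_assoc, hp.isIdempotentElem.eq]
    simp only [← mul_assoc, hp.isIdempotentElem.eq]
  refine hp0 (hN p hp fun x y => ?_)
  have hxy : p * (p * x * p * (p * y * p)) * p = p * x * p * (p * y * p) := by
    simp only [mul_assoc, hp.isIdempotentElem.eq]
    simp only [← mul_assoc, hp.isIdempotentElem.eq]
  calc
    p * x * p * (p * y * p) = β (p * x * p * (p * y * p)) := (symm hxy).symm
    _ = β (p * y * p) * β (p * x * p) := hβ.map_mul _ _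
    _ = p * y * p * (p * x * p) := congrArg₂ (· * ·) (symm (corner y)) (symm (corner x))

lemma IsStarAntiInvolution.exists_orthogonal_image (hβ : IsStarAntiInvolution β)
    (hA : IsRickart A) (hN : HasNoAbelianProjection A) (hp : IsStarProjection p) (hβp : β p = p)
    (hp0 : p ≠ 0) : ∃ e ≠ 0, IsStarProjection e ∧ p * e = e ∧ e * β e = 0 := by
  obtain ⟨k, hk0, hk, hβk, hpk⟩ := hβ.exists_skew hN hp hβp hp0
  set P := cfc (fun t : ℝ => t * max t 0) k with hP
  have hPsa : IsSelfAdjoint P := cfc_predicate _ k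
  -- `P` is the square of the positive part of `k`, which `β` sends to that of the negative part.
  have hβP : β P = cfc (fun t : ℝ => -t * max (-t) 0) k := by
    rw [hP, hβ.map_cfc hk _ (by fun_prop), hβk]
    exact (cfc_comp_neg (fun t : ℝ => t * max t 0) k).symm
  have hPβP : P * β P = 0 := by
    rw [hβP, ← cfc_mul .., ← cfc_zero ℝ k]
    refine cfc_congr fun t _ => ?_
    rcases le_total t 0 with ht | ht <;> simp [ht]
  have hadd : P + β P = k * k := by
    rw [hβP, ← cfc_add .., ← pow_two, ← cfc_pow_id (R := ℝ) k 2]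
    refine cfc_congr fun t _ => ?_
    linear_combination t * max_zero_sub_max_neg_zero_eq_self t
  have hP0 : P ≠ 0 := fun h => hk0 <| by
    rw [h, map_zero, add_zero] at hadd
    rwa [← CStarRing.star_mul_self_eq_zero_iff, hk.star_eq, eq_comm]
  have hpP : p * P = P := by
    rw [hP, cfc_mul .., cfc_id' ℝ k, ← mul_assoc, hpk]
  obtain ⟨e, he⟩ := hA P
  have hβe : IsLeftSupport {β P} (β e) := by
    simpa only [Set.image_singleton] using he.image hβ (by simpa using hPsa)
  refine ⟨e, fun h => hP0 ?_, he.isStarProjection, ?_, ?_⟩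
  · rw [← he.mul_left rfl, h, zero_mul]
  · exact he.mul_eq_self (by simpa using hpP)
  · have h : P * β e = 0 := (hβe.mul_eq_zero_iff _).2 fun a ha => by rw [ha, hPβP]
    have h' : β e * e = 0 := (he.mul_eq_zero_iff _).2 fun a ha => by
      rw [Set.mem_singleton_iff.1 ha]
      simpa only [star_mul, hPsa.star_eq, hβe.isStarProjection.isSelfAdjoint.star_eq,
        star_zero] using congrArg star h
    simpa only [star_mul, he.isStarProjection.isSelfAdjoint.star_eq,
      hβe.isStarProjection.isSelfAdjoint.star_eq, star_zero] using congrArg star h'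

lemma IsStarAntiInvolution.add_map_star_sq (hβ : IsStarAntiInvolution β) {e z : A}
    (he : IsStarProjection e) (hef : e * β e = 0) (hez : e * z = z) (hze : z * e = z)
    (hzz : z * z = 0) :
    e * (z + β (star z)) = z ∧ (z + β (star z)) * (z + β (star z)) = 0 := by
  have hfe : β e * e = 0 := by
    simpa only [star_mul, he.isSelfAdjoint.star_eq, (hβ.isStarProjection he).isSelfAdjoint.star_eq,
      star_zero] using congrArg star hef
  set y := β (star z) with hy
  have hfy : β e * y = y := by
    rw [hy, ← hβ.map_mul, ← he.isSelfAdjoint.star_eq, ← star_mul, hez]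
  have hyf : y * β e = y := by
    rw [hy, ← hβ.map_mul, ← he.isSelfAdjoint.star_eq, ← star_mul, hze]
  have hey : e * y = 0 := by rw [← hfy, ← mul_assoc, hef, zero_mul]
  have hye : y * e = 0 := by rw [← hyf, mul_assoc, hfe, mul_zero]
  have hyy : y * y = 0 := by rw [hy, ← hβ.map_mul, ← star_mul, hzz, star_zero, map_zero]
  refine ⟨by rw [mul_add, hez, hey, add_zero], ?_⟩
  calc
    (z + y) * (z + y) = z * z + z * (e * y) + y * (e * z) + y * y := by
      rw [← mul_assoc z, hze, hez]
      noncomm_ring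
    _ = 0 := by
      rw [hzz, hey, ← mul_assoc, hye, hyy, mul_zero, zero_mul, add_zero, add_zero, add_zero]

lemma IsStarAntiInvolution.exists_sq_eq_zero (hβ : IsStarAntiInvolution β)
    (hA : IsRickart A) (hN : HasNoAbelianProjection A) (hp : IsStarProjection p) (hβp : β p = p)
    (hp0 : p ≠ 0) : ∃ x ≠ 0, β x = star x ∧ x * x = 0 ∧ p * x = x ∧ x * p = x := by
  obtain ⟨e, he0, he, hpe, hef⟩ := hβ.exists_orthogonal_image hA hN hp hβp hp0
  obtain ⟨z, hz0, hez, hzz⟩ := hN.exists_sq_eq_zero hA he he0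
  have hze : z * e = z := by rw [← hez, mul_assoc, he.isIdempotentElem.eq]
  have hez' : e * z = z := by rw [← hez, ← mul_assoc, ← mul_assoc, he.isIdempotentElem.eq]
  have hep : e * p = e := by
    simpa only [star_mul, he.isSelfAdjoint.star_eq, hp.isSelfAdjoint.star_eq] using
      congrArg star hpe
  have hpz : p * z = z := by rw [← hez', ← mul_assoc, hpe]
  have hzp : z * p = z := by rw [← hze, mul_assoc, hep]
  have hpβz : p * β (star z) = β (star z) := by
    nth_rw 1 [← hβp]
    rw [← hβ.map_mul, ← hp.isSelfAdjoint.star_eq, ← star_mul, hpz]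
  have hβzp : β (star z) * p = β (star z) := by
    nth_rw 1 [← hβp]
    rw [← hβ.map_mul, ← hp.isSelfAdjoint.star_eq, ← star_mul, hzp]
  obtain ⟨hex, hxx⟩ := hβ.add_map_star_sq he hef hez' hze hzz
  refine ⟨z + β (star z), fun h => hz0 ?_, ?_, hxx, ?_, ?_⟩
  · rw [← hex, h, mul_zero]
  · rw [map_add, hβ.map_map, star_add, hβ.map_star, star_star, add_comm]
  · rw [mul_add, hpz, hpβz]
  · rw [add_mul, hzp, hβzp]

lemma exists_cfc_invSqrt {a : A} (ha : IsSelfAdjoint a) (hspec : ∀ t ∈ spectrum ℝ a, 0 ≤ t)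
    (ha0 : a ≠ 0) :
    ∃ u v : ℝ → ℝ, Continuous u ∧ Continuous v ∧ cfc u a ≠ 0 ∧ a ∣ cfc u a ∧
      cfc v a * a * cfc v a * cfc u a = cfc u a := by
  set ε := ‖a‖ / 2
  have hε : 0 < ε := half_pos (norm_pos_iff.2 ha0)
  have hm (t : ℝ) : 0 < max t ε := hε.trans_le (le_max_right t ε)
  have hu : Continuous fun t : ℝ => max (t - ε) 0 := by fun_prop
  have hv : Continuous fun t : ℝ => (√(max t ε))⁻¹ :=
    Continuous.inv₀ (by fun_prop) fun t => (Real.sqrt_pos.2 (hm t)).ne'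
  have hdiv : Continuous fun t : ℝ => max (t - ε) 0 / max t ε :=
    Continuous.div hu (by fun_prop) fun t => (hm t).ne'
  have hmul {f g : ℝ → ℝ} (hf : Continuous f) (hg : Continuous g) :
      cfc f a * cfc g a = cfc (f * g) a :=
    (cfc_mul f g a hf.continuousOn hg.continuousOn).symm
  refine ⟨_, _, hu, hv, fun hu0 => ?_, ⟨cfc (fun t => max (t - ε) 0 / max t ε) a, ?_⟩, ?_⟩
  · refine (half_lt_self (norm_pos_iff.2 ha0)).not_ge ?_
    refine (congrArg norm (cfc_id' ℝ a)).ge.trans (norm_cfc_le hε.le fun t ht => ?_)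
    have hut := norm_apply_le_norm_cfc (fun t : ℝ => max (t - ε) 0) a ht
    rw [hu0, norm_zero, norm_le_zero_iff, max_eq_right_iff, sub_nonpos] at hut
    rwa [Real.norm_of_nonneg (hspec t ht)]
  · nth_rw 2 [← cfc_id' ℝ a]
    rw [hmul continuous_id' hdiv]
    refine cfc_congr fun t _ => ?_
    rcases le_total t ε with ht | ht
    · simp [ht]
    · simp [ht, mul_div_cancel₀, (hε.trans_le ht).ne']
  · nth_rw 2 [← cfc_id' ℝ a]
    rw [hmul hv continuous_id', hmul (hv.mul continuous_id') hv,
      hmul ((hv.mul continuous_id').mul hv) hu]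
    refine cfc_congr fun t _ => ?_
    rcases le_total t ε with ht | ht
    · simp [ht]
    · have hsqrt : (√t)⁻¹ * t * (√t)⁻¹ = 1 := by
        have ht0 : 0 < t := hε.trans_le ht
        field_simp
        exact (Real.sq_sqrt ht0.le).symm
      simp only [Pi.mul_apply, max_eq_left ht, hsqrt, one_mul]

theorem IsRickart.exists_invSqrt (hA : IsRickart A) {x : A} (hx0 : x ≠ 0) :
    ∃ f h, IsStarProjection f ∧ f ≠ 0 ∧ IsSelfAdjoint h ∧ star (x * h * f) * (x * h * f) = f ∧
      (∀ y, y * (star x * x) = 0 → y * f = 0) ∧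
      ∀ β : A →ₗ[ℂ] A, IsStarAntiInvolution β → β x = star x → β f = f ∧ β h = h := by
  have ha : IsSelfAdjoint (star x * x) := .star_mul_self x
  obtain ⟨u, v, hu, hv, hu0, hdvd, huv⟩ := exists_cfc_invSqrt ha
    (fun t => spectrum_star_mul_self_nonneg t) ((CStarRing.star_mul_self_ne_zero_iff x).2 hx0)
  obtain ⟨f, hf⟩ := hA (cfc u (star x * x))
  have hvf : cfc v (star x * x) * (star x * x) * cfc v (star x * x) * f = f :=
    hf.mul_eq_self (by simpa using huv)
  have hsa : IsSelfAdjoint (cfc v (star x * x)) := cfc_predicate _ _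
  refine ⟨f, cfc v (star x * x), hf.isStarProjection, fun h => hu0 ?_, hsa, ?_, ?_, ?_⟩
  · rw [← hf.mul_left rfl, h, zero_mul]
  · rw [star_mul, star_mul, hsa.star_eq, hf.isStarProjection.isSelfAdjoint.star_eq]
    calc
      _ = f * (cfc v (star x * x) * (star x * x) * cfc v (star x * x) * f) := by
        simp only [mul_assoc]
      _ = f := by rw [hvf, hf.isStarProjection.isIdempotentElem.eq]
  · obtain ⟨g, hg⟩ := hdvd
    refine fun y hy => (hf.mul_eq_zero_iff _).2 fun a ha => ?_
    rw [Set.mem_singleton_iff.1 ha, hg, ← mul_assoc, hy, zero_mul]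
  · intro β hβ hβx
    have hβa : β (star x * x) = star x * x := by rw [hβ.map_mul, hβ.map_star, hβx, star_star]
    refine ⟨?_, by rw [hβ.map_cfc ha _ hv, hβa]⟩
    have hβf := hf.image hβ (by simp [cfc_predicate])
    rw [Set.image_singleton, hβ.map_cfc ha _ hu, hβa] at hβf
    exact hβf.unique hf

theorem IsStarAntiInvolution.exists_partialIsometry (hβ : IsStarAntiInvolution β)
    (hA : IsRickart A) (hN : HasNoAbelianProjection A) (hp : IsStarProjection p) (hβp : β p = p)
    (hp0 : p ≠ 0) :
    ∃ w ≠ 0, w * star w * w = w ∧ β w = star w ∧ w * w = 0 ∧ p * w = w ∧ w * p = w := by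
  obtain ⟨x, hx0, hβx, hxx, hpx, hxp⟩ := hβ.exists_sq_eq_zero hA hN hp hβp hp0
  obtain ⟨f, h, hf, hf0, hh, hff, hker, hsymm⟩ := hA.exists_invSqrt hx0
  obtain ⟨hβf, hβh⟩ := hsymm β hβ hβx
  have hfx : f * x = 0 := by
    simpa only [star_mul, hf.isSelfAdjoint.star_eq, star_star, star_zero] using
      congrArg star (hker (star x) (by rw [← mul_assoc, ← star_mul, hxx, star_zero, zero_mul]))
  have hpf : p * f = f := by
    have hp' : (1 - p) * f = 0 := hker _ (by
      rw [← mul_assoc, sub_mul, one_mul, ← hp.isSelfAdjoint.star_eq, ← star_mul, hxp, sub_self,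
        zero_mul])
    rwa [sub_mul, one_mul, sub_eq_zero, eq_comm] at hp'
  have hfp : f * p = f := by
    simpa only [star_mul, hf.isSelfAdjoint.star_eq, hp.isSelfAdjoint.star_eq] using
      congrArg star hpf
  refine ⟨x * h * f, fun hw => hf0 ?_, ?_, ?_, ?_, ?_, ?_⟩
  · rw [← hff, hw, mul_zero]
  · rw [mul_assoc, hff, mul_assoc, hf.isIdempotentElem.eq]
  · simp only [hβ.map_mul, hβf, hβh, hβx, star_mul, hf.isSelfAdjoint.star_eq, hh.star_eq]
  · rw [mul_assoc (x * h) f, ← mul_assoc f, ← mul_assoc f, hfx, zero_mul, zero_mul, mul_zero]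
  · rw [← mul_assoc, ← mul_assoc, hpx]
  · rw [mul_assoc, hfp]

end SquareZeroPartialIsometry

section SymmRow

variable {R A ι κ : Type*} [CommRing R] [Ring A] [StarRing A] [Algebra R A] {β : A →ₗ[R] A}

/-- The row `v` consists of partial isometries with common range projection `v 0` and mutually
orthogonal source projections, and `β` maps each `v i` to its adjoint. It is the `0`-th row of the
system of matrix units `star (v i) * v j` of the corner given by `∑ i, star (v i) * v i`. -/
structure IsSymmRow [Zero ι] (β : A →ₗ[R] A) (v : ι → A) : Prop where
  mul_star_same (i : ι) : v i * star (v i) = v 0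
  mul_star_of_ne {i j : ι} (h : i ≠ j) : v i * star (v j) = 0
  zeroth_mul (i : ι) : v 0 * v i = v i
  map (i : ι) : β (v i) = star (v i)

lemma isSymmRow_pair (hβ : IsStarAntiInvolution β) {w : A} (hw : w * star w * w = w)
    (hβw : β w = star w) (hww : w * w = 0) : IsSymmRow β ![w * star w, w] where
  mul_star_same i := by fin_cases i <;> simp [← mul_assoc, hw]
  mul_star_of_ne {i j} h := by
    have hww' : star w * star w = 0 := by rw [← star_mul, hww, star_zero]
    fin_cases i <;> fin_cases j <;> simp [mul_assoc, ← mul_assoc w w, hww, hww'] at h ⊢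
  zeroth_mul i := by fin_cases i <;> simp [← mul_assoc, hw]
  map i := by fin_cases i <;> simp [hβ.map_mul, hβ.map_star, hβw]

namespace IsSymmRow

section Zero

variable [Zero ι] [Zero κ] {v w : ι → A} {z : κ → A}

lemma star_zeroth (hv : IsSymmRow β v) : star (v 0) = v 0 := by
  rw [← hv.mul_star_same 0, star_mul, star_star]

lemma isStarProjection (hv : IsSymmRow β v) : IsStarProjection (v 0) where
  isIdempotentElem := hv.zeroth_mul 0
  isSelfAdjoint := hv.star_zeroth

lemma prod (hβ : IsStarAntiInvolution β) (hz : IsSymmRow β z) (hw : IsSymmRow β w)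
    (hzw : ∀ k, z k * w 0 = z k) : IsSymmRow β fun a : κ × ι => z a.1 * w a.2 where
  mul_star_same a := by
    rw [star_mul, ← mul_assoc, mul_assoc (z a.1), hw.mul_star_same, hzw, hz.mul_star_same,
      Prod.fst_zero, Prod.snd_zero, hzw]
  mul_star_of_ne {a b} h := by
    rw [star_mul, ← mul_assoc, mul_assoc (z a.1)]
    rcases eq_or_ne a.2 b.2 with h2 | h2
    · rw [h2, hw.mul_star_same, hzw, hz.mul_star_of_ne fun h1 => h (Prod.ext h1 h2)]
    · rw [hw.mul_star_of_ne h2, mul_zero, zero_mul]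
  zeroth_mul a := by
    rw [Prod.fst_zero, Prod.snd_zero, hzw, ← mul_assoc, hz.zeroth_mul]
  map a := by rw [hβ.map_mul, hz.map, hw.map, star_mul]

lemma mul_eq_zero_of_mul_star (hv : IsSymmRow β v) {x : A} (hx : x * star (v 0) = 0) (i : ι) :
    x * v i = 0 := by
  rw [← hv.zeroth_mul, ← hv.star_zeroth, ← mul_assoc, hx, zero_mul]

lemma add (hv : IsSymmRow β v) (hw : IsSymmRow β w) (h : ∀ i j, v i * star (w j) = 0) :
    IsSymmRow β (v + w) := by
  have h' (i j : ι) : w i * star (v j) = 0 := by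
    simpa only [star_mul, star_star, star_zero] using congrArg star (h j i)
  have hvw := hw.mul_eq_zero_of_mul_star (h 0 0)
  have hwv := hv.mul_eq_zero_of_mul_star (h' 0 0)
  constructor
  · intro i
    simp only [Pi.add_apply, star_add, mul_add, add_mul, h, h', hv.mul_star_same,
      hw.mul_star_same, add_zero, zero_add]
  · intro i j hij
    simp only [Pi.add_apply, star_add, mul_add, add_mul, h, h', hv.mul_star_of_ne hij,
      hw.mul_star_of_ne hij, add_zero]
  · intro i
    simp only [Pi.add_apply, mul_add, add_mul, hvw, hwv, hv.zeroth_mul, hw.zeroth_mul, add_zero,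
      zero_add]
  · intro i
    rw [Pi.add_apply, map_add, hv.map, hw.map, star_add]

lemma mul_eq_left_of_le (hv : IsSymmRow β v) (hw : IsSymmRow β w) (h : ∀ i, v i = v 0 * w i) :
    w 0 * v 0 = v 0 := by
  rw [← hv.star_zeroth, ← hw.star_zeroth, ← star_mul, ← h]

end Zero

section Source

variable [Zero ι] [Fintype ι] {v : ι → A}

lemma mul_source (hv : IsSymmRow β v) (i : ι) : v i * ∑ j, star (v j) * v j = v i := by
  classical
  rw [Finset.mul_sum, Finset.sum_eq_single i]
  · rw [← mul_assoc, hv.mul_star_same, hv.zeroth_mul]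
  · intro j _ hji
    rw [← mul_assoc, hv.mul_star_of_ne hji.symm, zero_mul]
  · simp

lemma isStarProjection_source (hv : IsSymmRow β v) :
    IsStarProjection (∑ j, star (v j) * v j) where
  isIdempotentElem := by
    rw [IsIdempotentElem, Finset.sum_mul]
    exact Finset.sum_congr rfl fun i _ => by rw [mul_assoc, hv.mul_source]
  isSelfAdjoint := by simp only [IsSelfAdjoint, star_sum, star_mul, star_star]

lemma map_source (hβ : IsStarAntiInvolution β) (hv : IsSymmRow β v) :
    β (∑ j, star (v j) * v j) = ∑ j, star (v j) * v j := by
  simp only [map_sum, hβ.map_mul, hβ.map_star, hv.map, star_star]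

lemma isSymmMatrixUnits (hβ : IsStarAntiInvolution β) (hv : IsSymmRow β v)
    (h : ∑ j, star (v j) * v j = 1) : IsSymmMatrixUnits β fun i j => star (v i) * v j where
  mul_same i j k := by
    rw [mul_assoc, ← mul_assoc (v j), hv.mul_star_same, hv.zeroth_mul]
  mul_of_ne i l j k hjk := by
    rw [mul_assoc, ← mul_assoc (v j), hv.mul_star_of_ne hjk, zero_mul, mul_zero]
  sum_diag := h
  map i j := by rw [hβ.map_mul, hβ.map_star, hv.map, hv.map, star_star]

lemma mul_star_eq_zero (hv : IsSymmRow β v) {x : A}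
    (hx : x * (1 - ∑ j, star (v j) * v j) = x) (i : ι) : v i * star x = 0 := by
  have hi : v i * (1 - ∑ j, star (v j) * v j) = 0 := by
    rw [mul_sub, mul_one, hv.mul_source, sub_self]
  rw [← hx, star_mul, hv.isStarProjection_source.one_sub.isSelfAdjoint.star_eq, ← mul_assoc, hi,
    zero_mul]

end Source

section Directed

variable [Zero ι] {α : Type*} [Preorder α] [IsDirectedOrder α] {v : α → ι → A} {E : A} {W : ι → A}

lemma corner_eq_of_forall_mul (hv : ∀ a, IsSymmRow β (v a))
    (mono : ∀ a b, a ≤ b → ∀ i, v a i = v a 0 * v b i)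
    (hE : IsLeftSupport (Set.range fun a => v a 0) E)
    {X Y : A} (h : ∀ a b, a ≤ b → v b 0 * X * v a 0 = v b 0 * Y * v a 0) :
    E * X * E = E * Y * E := by
  have hXY (a b : α) : v b 0 * X * v a 0 = v b 0 * Y * v a 0 := by
    obtain ⟨c, hac, hbc⟩ := exists_ge_ge a b
    rw [mono b c hbc]
    simp only [mul_assoc] at h ⊢
    rw [h a c hac]
  have hXYE (b : α) : v b 0 * X * E = v b 0 * Y * E :=
    hE.mul_eq_mul_iff.2 (Set.forall_mem_range.2 fun a => hXY a b)
  have hEXY : star (X * E) * E = star (Y * E) * E :=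
    hE.mul_eq_mul_iff.2 <| Set.forall_mem_range.2 fun b => by
      simpa only [star_mul, star_star, (hv b).star_zeroth, mul_assoc] using
        congrArg star (hXYE b)
  simpa only [star_mul, star_star, hE.isStarProjection.isSelfAdjoint.star_eq, mul_assoc] using
    congrArg star hEXY

theorem of_directed (hβ : IsStarAntiInvolution β) (hv : ∀ a, IsSymmRow β (v a))
    (mono : ∀ a b, a ≤ b → ∀ i, v a i = v a 0 * v b i)
    (hE : IsLeftSupport (Set.range fun a => v a 0) E) (hW : ∀ a i, W i * v a 0 = star (v a i)) :
    IsSymmRow β (fun i => E * star (W i)) ∧ ∀ a i, v a i = v a 0 * (E * star (W i)) := by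
  have hEsa := hE.isStarProjection.isSelfAdjoint.star_eq
  have hEE := hE.isStarProjection.isIdempotentElem.eq
  have hvW (a : α) (i : ι) : v a 0 * star (W i) = v a i := by
    simpa only [star_mul, star_star, (hv a).star_zeroth] using congrArg star (hW a i)
  have hvE (a : α) : v a 0 * E = v a 0 := by
    simpa only [star_mul, hEsa, (hv a).star_zeroth] using
      congrArg star (hE.mul_left (Set.mem_range_self a))
  have ext_E {X Y : A} (h : ∀ a, X * v a 0 = Y * v a 0) : X * E = Y * E :=
    hE.mul_eq_mul_iff.2 (Set.forall_mem_range.2 h)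
  have hE0 : E * star (W 0) = E := by
    have h : W 0 * E = 1 * E := ext_E fun a => by rw [hW, (hv a).star_zeroth, one_mul]
    simpa only [star_mul, one_mul, hEsa] using congrArg star h
  have hβE : β E = E := by
    have h := hE.image hβ (Set.forall_mem_range.2 fun a => (hv a).star_zeroth)
    simp only [← Set.range_comp, Function.comp_def, (hv _).map, (hv _).star_zeroth] at h
    exact h.unique hE
  have hmul (i j : ι) : E * star (W i) * star (E * star (W j)) = E * (star (W i) * W j) * E := by
    simp only [star_mul, star_star, hEsa, mul_assoc]
  have hvv {a b : α} (hab : a ≤ b) (i j : ι) :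
      v b 0 * (star (W i) * W j) * v a 0 = v b i * star (v b j) * v a 0 := by
    rw [← mul_assoc, hvW, mul_assoc, hW, mono a b hab, star_mul, (hv a).star_zeroth, mul_assoc]
  refine ⟨⟨fun i => ?_, fun {i j} hij => ?_, fun i => ?_, fun i => ?_⟩, fun a i => ?_⟩
  · have h : E * (star (W i) * W i) * E = E * 1 * E :=
      corner_eq_of_forall_mul hv mono hE fun a b hab => by
        rw [hvv hab, (hv b).mul_star_same, mul_one]
    rw [hmul, h, hE0, mul_one, hEE]
  · have h : E * (star (W i) * W j) * E = E * 0 * E :=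
      corner_eq_of_forall_mul hv mono hE fun a b hab => by
        rw [hvv hab, (hv b).mul_star_of_ne hij, mul_zero]
    rw [hmul, h, mul_zero, zero_mul]
  · rw [hE0, ← mul_assoc, hEE]
  · have h : β (star (W i)) * E = W i * E := ext_E fun a => by
      rw [hW, ← (hv a).map, ← hvW a i, hβ.map_mul, (hv a).map, (hv a).star_zeroth]
    rw [hβ.map_mul, hβE, h, star_mul, star_star, hEsa]
  · rw [← mul_assoc, hvE, hvW]

end Directed

end IsSymmRow

end SymmRow

section VonNeumann

open Filter Topology

variable {H : Type*} [NormedAddCommGroup H] [InnerProductSpace ℂ H] [CompleteSpace H]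

instance isClosed_toStarSubalgebra (N : VonNeumannAlgebra H) :
    IsClosed (N.toStarSubalgebra : Set (H →L[ℂ] H)) := by
  rw [N.coe_toStarSubalgebra, ← N.centralizer_centralizer]
  exact Set.isClosed_centralizer _

instance (N : VonNeumannAlgebra H) : CStarAlgebra N.toStarSubalgebra :=
  StarSubalgebra.cstarAlgebra N.toStarSubalgebra

lemma mem_of_forall_commute (N : VonNeumannAlgebra H) {x : H →L[ℂ] H}
    (hx : ∀ y ∈ N.commutant, Commute y x) : x ∈ N := by
  rw [← N.commutant_commutant, VonNeumannAlgebra.mem_commutant_iff]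
  exact hx

lemma isLeftSupport_starProjection (S : Set (H →L[ℂ] H)) :
    IsLeftSupport S
      (⨆ a ∈ S, LinearMap.range (a : H →ₗ[ℂ] H)).topologicalClosure.starProjection where
  isStarProjection := isStarProjection_starProjection
  mul_eq_zero_iff y := by
    set U := (⨆ a ∈ S, LinearMap.range (a : H →ₗ[ℂ] H)).topologicalClosure
    have hU : U ≤ LinearMap.ker (y : H →ₗ[ℂ] H) ↔ ∀ a ∈ S, y * a = 0 := by
      refine Iff.trans ⟨(Submodule.le_topologicalClosure _).trans, fun h =>
        Submodule.topologicalClosure_minimal _ h y.isClosed_ker⟩ (iSup₂_le_iff.trans ?_)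
      refine forall₂_congr fun a _ => LinearMap.range_le_ker_iff.trans ?_
      rw [← toLinearMap_comp, ← toLinearMap_zero, coe_inj, mul_def]
    rw [← hU]
    refine ⟨fun h u hu => ?_, fun h => ContinuousLinearMap.ext fun x =>
      h (U.starProjection_apply_mem x)⟩
    rw [LinearMap.mem_ker, coe_coe, ← Submodule.starProjection_eq_self_iff.2 hu]
    exact congr($h u)

theorem exists_isLeftSupport (N : VonNeumannAlgebra H) (S : Set N.toStarSubalgebra) :
    ∃ p, IsLeftSupport S p := by
  obtain ⟨P, hP⟩ : ∃ P, IsLeftSupport (Subtype.val '' S : Set (H →L[ℂ] H)) P :=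
    ⟨_, isLeftSupport_starProjection _⟩
  have commute_of_mem {y : H →L[ℂ] H} (hy : y ∈ N.commutant) :
      ∀ a ∈ (Subtype.val '' S : Set (H →L[ℂ] H)), Commute y a :=
    Set.forall_mem_image.2 fun a _ =>
      (VonNeumannAlgebra.mem_commutant_iff.1 hy a a.2).symm
  have hPN : P ∈ N := mem_of_forall_commute N fun y hy =>
    hP.commute (commute_of_mem hy) (commute_of_mem (star_mem hy))
  refine ⟨⟨P, hPN⟩, ⟨?_, ?_⟩, fun y => ?_⟩
  · exact Subtype.ext hP.isStarProjection.isIdempotentElem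
  · exact Subtype.ext hP.isStarProjection.isSelfAdjoint
  · rw [← Subtype.coe_inj]
    refine (hP.mul_eq_zero_iff y).trans (Set.forall_mem_image.trans ?_)
    exact forall₂_congr fun a _ => Subtype.coe_inj (a := y * a) (b := 0)

section Directed

variable {α : Type*} [Preorder α]

lemma exists_tendsto_apply_of_projection {e : α → H →L[ℂ] H} (he : ∀ a, IsStarProjection (e a))
    (mono : ∀ a b, a ≤ b → e b * e a = e a) (x : H) :
    ∃ y, Tendsto (fun a => e a x) atTop (𝓝 y) := by
  choose hproj heq using fun a => isStarProjection_iff_eq_starProjection_range.1 (he a)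
  have hmono : Monotone fun a => LinearMap.range (e a : H →ₗ[ℂ] H) := fun a b hab => by
    rintro _ ⟨z, rfl⟩
    exact ⟨e a z, congr($(mono a b hab) z)⟩
  have h := Submodule.starProjection_tendsto_closure_iSup _ hmono x
  exact ⟨_, h.congr fun a => by rw [← heq a]⟩

variable [IsDirectedOrder α] [Nonempty α]

lemma exists_tendsto_apply {e w : α → H →L[ℂ] H} (he : ∀ a, IsStarProjection (e a))
    (mono : ∀ a b, a ≤ b → e b * e a = e a) (hw : ∀ a b, a ≤ b → w b * e a = w a)
    (hw1 : ∀ a, ‖w a‖ ≤ 1) (x : H) :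
    ∃ y, Tendsto (fun a => w a x) atTop (𝓝 y) := by
  have hle {a b : α} (hab : a ≤ b) : dist (w b x) (w a x) ≤ dist (e b x) (e a x) := by
    have h : w b x - w a x = w b (e b x - e a x) := by
      rw [map_sub, ← mul_apply_eq_comp, ← mul_apply_eq_comp, hw b b le_rfl, hw a b hab]
    rw [dist_eq_norm, dist_eq_norm, h]
    exact (w b).le_of_opNorm_le_of_le (hw1 b) le_rfl |>.trans_eq (one_mul _)
  obtain ⟨y, hy⟩ := exists_tendsto_apply_of_projection he mono x
  refine cauchy_map_iff_exists_tendsto.1 (Metric.cauchy_iff.2 ⟨inferInstance, fun ε hε => ?_⟩)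
  obtain ⟨a, ha⟩ := eventually_atTop.1 (Metric.tendsto_nhds.1 hy (ε / 4) (by positivity))
  have hwa {b : α} (hab : a ≤ b) : dist (w b x) (w a x) < ε / 2 := by
    linarith [hle hab, dist_triangle_right (e b x) (e a x) y, ha a le_rfl, ha b hab]
  refine ⟨_, image_mem_map (Ici_mem_atTop a), ?_⟩
  rintro _ ⟨b, hb, rfl⟩ _ ⟨c, hc, rfl⟩
  linarith [dist_triangle_right (w b x) (w c x) (w a x), hwa hb, hwa hc]

theorem exists_mul_eq_of_directed (N : VonNeumannAlgebra H) {e w : α → N.toStarSubalgebra}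
    (he : ∀ a, IsStarProjection (e a)) (mono : ∀ a b, a ≤ b → e b * e a = e a)
    (hw : ∀ a b, a ≤ b → w b * e a = w a) (hw1 : ∀ a, ‖w a‖ ≤ 1) :
    ∃ W, ∀ a, W * e a = w a := by
  have hlim (x : H) : ∃ y, Tendsto (fun a => (w a : H →L[ℂ] H) x) atTop (𝓝 y) :=
    exists_tendsto_apply (e := fun a => (e a : H →L[ℂ] H))
      (fun a => (he a).map N.toStarSubalgebra.subtype)
      (fun a b hab => congrArg Subtype.val (mono a b hab))
      (fun a b hab => congrArg Subtype.val (hw a b hab)) hw1 x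
  choose f hf using hlim
  let W : H →L[ℂ] H := ofTendstoOfBoundedRange (l := atTop) (𝕜 := ℂ) f (fun a => (w a : H →L[ℂ] H))
    (tendsto_pi_nhds.2 hf) (isBounded_iff_forall_norm_le.2 ⟨1, Set.forall_mem_range.2 hw1⟩)
  have hW (x : H) : Tendsto (fun a => (w a : H →L[ℂ] H) x) atTop (𝓝 (W x)) := hf x
  have hWN : W ∈ N := mem_of_forall_commute N fun y hy => by
    ext x
    refine tendsto_nhds_unique ((y.continuous.tendsto _).comp (hW x)) ((hW (y x)).congr fun a => ?_)
    exact congr($(VonNeumannAlgebra.mem_commutant_iff.1 hy _ (w a).2) x)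
  refine ⟨⟨W, hWN⟩, fun a => Subtype.ext <| ContinuousLinearMap.ext fun x => ?_⟩
  refine tendsto_nhds_unique (hW ((e a : H →L[ℂ] H) x)) (tendsto_const_nhds.congr' ?_)
  filter_upwards [eventually_ge_atTop a] with b hab
  exact congr($(hw a b hab).val x).symm

end Directed

end VonNeumann

section SymmRowOrder

section Ring

variable {R A ι : Type*} [CommRing R] [Ring A] [StarRing A] [Algebra R A] [Zero ι]

/-- The type of symmetric rows, preordered by being a corner: `v ≤ w` when each `v i` is obtained
from `w i` by cutting down to the range projection `v 0`. -/
def SymmRow (ι : Type*) [Zero ι] (β : A →ₗ[R] A) : Type _ :=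
  {v : ι → A // IsSymmRow β v}

instance (β : A →ₗ[R] A) : Preorder (SymmRow ι β) where
  le v w := ∀ i, v.1 i = v.1 0 * w.1 i
  le_refl v i := (v.2.zeroth_mul i).symm
  le_trans u v w huv hvw i := by rw [huv i, hvw i, ← mul_assoc, ← huv 0]

end Ring

lemma IsSymmRow.norm_le_one {A ι : Type*} [CStarAlgebra A] [Zero ι] {β : A →ₗ[ℂ] A} {v : ι → A}
    (hv : IsSymmRow β v) (i : ι) : ‖v i‖ ≤ 1 := by
  refine (sq_le_one_iff₀ (norm_nonneg _)).1 ?_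
  rw [sq, ← CStarRing.norm_self_mul_star, hv.mul_star_same]
  exact hv.isStarProjection.norm_le

lemma IsStarAntiInvolution.exists_isSymmRow {A : Type*} [CStarAlgebra A] {β : A →ₗ[ℂ] A}
    (hβ : IsStarAntiInvolution β) (hA : IsRickart A) (hN : HasNoAbelianProjection A) {p : A}
    (hp : IsStarProjection p) (hβp : β p = p) (hp0 : p ≠ 0) :
    ∃ v : Fin 2 × Fin 2 → A, IsSymmRow β v ∧ v 0 ≠ 0 ∧ ∀ i, v i * p = v i := by
  obtain ⟨w, hw0, hw, hβw, hww, hpw, hwp⟩ := hβ.exists_partialIsometry hA hN hp hβp hp0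
  have hrow_w := isSymmRow_pair hβ hw hβw hww
  have hq : IsStarProjection (w * star w) := hrow_w.isStarProjection
  obtain ⟨z, hz0, hz, hβz, hzz, hqz, hzq⟩ := hβ.exists_partialIsometry hA hN hq
    ((hrow_w.map 0).trans hrow_w.star_zeroth)
    ((CStarRing.mul_star_self_ne_zero_iff w).2 hw0)
  have hzq' : star z * (w * star w) = star z := by
    simpa only [star_mul, star_star] using congrArg star hqz
  have hwp' : star w * p = star w := by
    simpa only [star_mul, hp.isSelfAdjoint.star_eq] using congrArg star hpw
  have hzw (k : Fin 2) : ![z * star z, z] k * (w * star w) = ![z * star z, z] k := by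
    fin_cases k
    · exact (mul_assoc _ _ _).trans (congrArg (z * ·) hzq')
    · exact hzq
  refine ⟨_, (isSymmRow_pair hβ hz hβz hzz).prod hβ hrow_w hzw, ?_, fun i => ?_⟩
  · exact (hzw 0).trans_ne ((CStarRing.mul_star_self_ne_zero_iff z).2 hz0)
  · rw [mul_assoc]
    congr 1
    generalize i.2 = j
    fin_cases j
    · exact (mul_assoc _ _ _).trans (congrArg (w * ·) hwp')
    · exact hwp

variable {H : Type*} [NormedAddCommGroup H] [InnerProductSpace ℂ H] [CompleteSpace H]
  {N : VonNeumannAlgebra H} {β : N.toStarSubalgebra →ₗ[ℂ] N.toStarSubalgebra}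

theorem SymmRow.bddAbove_of_isChain {ι : Type*} [Zero ι] (hβ : IsStarAntiInvolution β)
    {c : Set (SymmRow ι β)} (hc : IsChain (· ≤ ·) c) (hne : c.Nonempty) : BddAbove c := by
  have := hc.directedOn.isDirectedOrder
  have := hne.to_subtype
  have hv (a : c) : IsSymmRow β a.1.1 := a.1.2
  have hstar (a b : c) (hab : a ≤ b) (i : ι) : star (b.1.1 i) * a.1.1 0 = star (a.1.1 i) := by
    rw [hab i, star_mul, (hv a).star_zeroth]
  have hlim (i : ι) := exists_mul_eq_of_directed N (e := fun a : c => a.1.1 0)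
    (w := fun a => star (a.1.1 i)) (fun a => (hv a).isStarProjection)
    (fun a b hab => (hv a).mul_eq_left_of_le (hv b) hab) (fun a b hab => hstar a b hab i)
    (fun a => (norm_star _).trans_le ((hv a).norm_le_one i))
  choose W hW using hlim
  obtain ⟨E, hE⟩ := exists_isLeftSupport N (Set.range fun a : c => a.1.1 0)
  obtain ⟨hrow, hle⟩ := IsSymmRow.of_directed hβ hv (fun a b hab => hab) hE fun a i => hW i a
  exact ⟨⟨_, hrow⟩, fun a ha => hle ⟨a, ha⟩⟩

theorem IsStarAntiInvolution.exists_isSymmMatrixUnits (hβ : IsStarAntiInvolution β)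
    (hN : HasNoAbelianProjection N.toStarSubalgebra) :
    ∃ e : Fin 2 × Fin 2 → Fin 2 × Fin 2 → N.toStarSubalgebra, IsSymmMatrixUnits β e := by
  have : Nonempty (SymmRow (Fin 2 × Fin 2) β) := ⟨⟨0, by constructor <;> simp⟩⟩
  obtain ⟨⟨v, hv⟩, hmax⟩ := zorn_le_nonempty fun c hc hne =>
    SymmRow.bddAbove_of_isChain (ι := Fin 2 × Fin 2) hβ hc hne
  refine ⟨_, hv.isSymmMatrixUnits hβ ?_⟩
  by_contra hs
  obtain ⟨w, hw, hw0, hws⟩ := hβ.exists_isSymmRow (fun a => exists_isLeftSupport N {a}) hN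
    hv.isStarProjection_source.one_sub (by rw [map_sub, hβ.map_one, hv.map_source hβ])
    (sub_ne_zero.2 (Ne.symm hs))
  have hvw (i j) : v i * star (w j) = 0 := hv.mul_star_eq_zero (hws j) i
  have hzeroth (i) : v 0 * (v + w) i = v i := by
    rw [Pi.add_apply, mul_add, hv.zeroth_mul, hw.mul_eq_zero_of_mul_star (hvw 0 0), add_zero]
  have hle := hmax (b := ⟨v + w, hv.add hw hvw⟩) fun i => (hzeroth i).symm
  have h := (hv.add hw hvw).mul_eq_left_of_le hv hle
  rw [hzeroth] at h
  exact hw0 (left_eq_add.1 h)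

end SymmRowOrder

section TripleHom

lemma comp_eq_self_of_add_eq_two_smul {K L : Type*} [NormedAddCommGroup K] [NormedSpace ℂ K]
    [NormedAddCommGroup L] [NormedSpace ℂ L] {p : L →L[ℂ] L} {q : K →L[ℂ] K} {y : K →L[ℂ] L}
    (hp : p ∘L p = p) (hq : q ∘L q = q) (hy : p ∘L y + y ∘L q = (2 : ℂ) • y) :
    p ∘L y = y ∧ y ∘L q = y := by
  have hpyq : p ∘L y ∘L q = p ∘L y := by
    have h := congrArg (p ∘L ·) hy
    simp only [comp_add, ← comp_assoc, hp, two_smul] at h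
    rw [← comp_assoc, add_left_cancel h]
  have hpyq' : p ∘L y ∘L q = y ∘L q := by
    have h := congrArg (· ∘L q) hy
    simp only [add_comp, comp_assoc, hq, two_smul] at h
    exact add_right_cancel h
  have hpq : p ∘L y = y ∘L q := hpyq.symm.trans hpyq'
  rw [← hpq, ← two_smul ℂ] at hy
  have hpy : p ∘L y = y := smul_right_injective _ two_ne_zero hy
  exact ⟨hpy, hpq ▸ hpy⟩

variable {K L : Type} [NormedAddCommGroup K] [InnerProductSpace ℂ K] [CompleteSpace K]
  [NormedAddCommGroup L] [InnerProductSpace ℂ L] [CompleteSpace L]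
  {A ι : Type*} [Ring A] [StarRing A] [Algebra ℂ A] [Fintype ι] {β : A →ₗ[ℂ] A}
  {e : ι → ι → A}

lemma jtri_self_left (x y : K →L[ℂ] L) : jtri x y x = tri x y x := by
  rw [jtri, ← two_smul ℂ, inv_smul_smul₀ two_ne_zero]

lemma IsSymmMatrixUnits.map_mem_of_tri_mem [Nontrivial ι] (hβ : IsAntiInvolution β)
    (he : IsSymmMatrixUnits β e) {T : Submodule ℂ (K →L[ℂ] L)}
    (hT : ∀ x ∈ T, ∀ y ∈ T, ∀ z ∈ T, tri x y z ∈ T) {φ : A →ₗ[ℂ] (K →L[ℂ] L)}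
    (hφ : ∀ a b c, φ (a * star b * c) = tri (φ a) (φ b) (φ c))
    (h : ∀ x, β x = x → φ x ∈ T) (a : A) : φ a ∈ T := by
  induction a using he.induction_symm hβ with
  | symm x hx => exact h x hx
  | add x y hx hy =>
    rw [map_add]
    exact T.add_mem hx hy
  | mul x y hx hy =>
    have hxy : φ (x * y) = tri (φ x) (φ 1) (φ y) := by rw [← hφ, star_one, mul_one]
    rw [hxy]
    exact hT _ hx _ (h 1 hβ.map_one) _ hy

lemma tri_eq_self_of_jtri_eq_self {u y : K →L[ℂ] L} (hu : jtri u u u = u) (hy : jtri u u y = y) :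
    tri u u y = y ∧ tri y u u = y := by
  rw [jtri_self_left, tri] at hu
  have hp : (u ∘L adjoint u) ∘L u ∘L adjoint u = u ∘L adjoint u := by
    rw [← comp_assoc, comp_assoc u, hu]
  have hq : (adjoint u ∘L u) ∘L adjoint u ∘L u = adjoint u ∘L u := by rw [comp_assoc, hu]
  have h : (u ∘L adjoint u) ∘L y + y ∘L adjoint u ∘L u = (2 : ℂ) • y := by
    nth_rw 3 [← hy]
    rw [jtri, smul_inv_smul₀ two_ne_zero, tri, tri, comp_assoc]
  simpa only [tri, comp_assoc] using comp_eq_self_of_add_eq_two_smul hp hq h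

/-- `π` restricts to a triple homomorphism on the `β`-symmetric elements. -/
def IsTripleHomOnSymm (β : A →ₗ[ℂ] A) (π : A →ₗ[ℂ] (K →L[ℂ] L)) : Prop :=
  ∀ x y z, β x = x → β y = y → β z = z →
    π ((2 : ℂ)⁻¹ • (x * star y * z + z * star y * x)) = jtri (π x) (π y) (π z)

namespace IsTripleHomOnSymm

variable {π : A →ₗ[ℂ] (K →L[ℂ] L)}

lemma map_quad (hπ : IsTripleHomOnSymm β π) {x y : A} (hx : β x = x) (hy : β y = y) :
    π (x * star y * x) = tri (π x) (π y) (π x) := by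
  have h := hπ x y x hx hy hx
  rwa [← two_smul ℂ, inv_smul_smul₀ two_ne_zero, jtri_self_left] at h

lemma map_star (hπ : IsTripleHomOnSymm β π) (hβ : IsAntiInvolution β) {x : A} (hx : β x = x) :
    π (star x) = tri (π 1) (π x) (π 1) := by
  rw [← hπ.map_quad hβ.map_one hx, one_mul, mul_one]

lemma tri_map_one (hπ : IsTripleHomOnSymm β π) (hβ : IsAntiInvolution β) {x : A} (hx : β x = x) :
    tri (π 1) (π 1) (π x) = π x ∧ tri (π x) (π 1) (π 1) = π x := by
  have h (z : A) (hz : β z = z) : jtri (π 1) (π 1) (π z) = π z := by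
    rw [← hπ 1 1 z hβ.map_one hβ.map_one hz, star_one, mul_one, one_mul, mul_one, mul_one,
      ← two_smul ℂ, inv_smul_smul₀ two_ne_zero]
  exact tri_eq_self_of_jtri_eq_self (h 1 hβ.map_one) (h x hx)

lemma isJordanHomOnSymm (hπ : IsTripleHomOnSymm β π) (hβ : IsStarAntiInvolution β) :
    IsJordanHomOnSymm β ((compL ℂ K L K (adjoint (π 1))).toLinearMap ∘ₗ π) where
  map_sq {x} hx := by
    have h := hπ.map_quad hx hβ.map_one
    rw [star_one, mul_one] at h
    change adjoint (π 1) ∘L π (x * x) = (adjoint (π 1) ∘L π x) ∘L adjoint (π 1) ∘L π x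
    rw [h, tri, comp_assoc]
  map_quad {x y} hx hy := by
    have h := hπ.map_quad hx (y := star y) (by rw [hβ.map_star, hy])
    rw [star_star, hπ.map_star hβ.toIsAntiInvolution hy] at h
    change adjoint (π 1) ∘L π (x * y * x) =
      ((adjoint (π 1) ∘L π x) ∘L adjoint (π 1) ∘L π y) ∘L adjoint (π 1) ∘L π x
    simp only [h, tri, adjoint_comp, adjoint_adjoint, comp_assoc]

theorem exists_extension (hπ : IsTripleHomOnSymm β π) (hβ : IsStarAntiInvolution β)
    (he : IsSymmMatrixUnits β e) (hι : 2 < Fintype.card ι) :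
    ∃ φ : A →ₗ[ℂ] (K →L[ℂ] L), (∀ x, β x = x → φ x = π x) ∧
      ∀ a b c, φ (a * star b * c) = tri (φ a) (φ b) (φ c) := by
  obtain ⟨Φ, hΦ⟩ := (hπ.isJordanHomOnSymm hβ).exists_nonUnitalAlgHom hβ.toIsAntiInvolution he hι
  have hΦ (x : A) (hx : β x = x) : Φ x = adjoint (π 1) ∘L π x := hΦ x hx
  have hΦ1 (a : A) : adjoint (π 1) ∘L π 1 ∘L Φ a = Φ a := by
    rw [← comp_assoc, ← hΦ 1 hβ.map_one, ← mul_def, ← map_mul, one_mul]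
  have : Nontrivial ι := Fintype.one_lt_card_iff_nontrivial.1 (by omega)
  have hΦstar (a : A) : Φ (star a) = adjoint (Φ a) := by
    refine he.map_star_of_symm hβ.toIsAntiInvolution Φ (fun x hx => ?_) a
    have h := congrArg adjoint (hπ.tri_map_one hβ.toIsAntiInvolution hx).2
    rw [hΦ x hx, hΦ (star x) (by rw [hβ.map_star, hx]), hπ.map_star hβ.toIsAntiInvolution hx]
    simp only [tri, adjoint_comp, adjoint_adjoint, star_eq_adjoint] at h ⊢
    simpa only [comp_assoc] using congrArg (· ∘L π 1) h
  refine ⟨(compL ℂ K K L (π 1)).toLinearMap ∘ₗ (Φ : A →ₗ[ℂ] (K →L[ℂ] K)), ?_, ?_⟩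
  · intro x hx
    change π 1 ∘L Φ x = π x
    rw [hΦ x hx]
    exact (hπ.tri_map_one hβ.toIsAntiInvolution hx).1
  · intro a b c
    change π 1 ∘L Φ (a * star b * c) = tri (π 1 ∘L Φ a) (π 1 ∘L Φ b) (π 1 ∘L Φ c)
    simp only [tri, map_mul, hΦstar, adjoint_comp, comp_assoc, hΦ1, mul_def]

end IsTripleHomOnSymm

lemma IsContinuousVNA.hasNoAbelianProjection {N : VonNeumannAlgebra H} (hN : IsContinuousVNA N) :
    HasNoAbelianProjection N.toStarSubalgebra := fun q hq hcomm =>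
  Subtype.ext <| hN q q.2 (congrArg Subtype.val hq.isSelfAdjoint)
    (congrArg Subtype.val hq.isIdempotentElem) fun x hx y hy =>
      congrArg Subtype.val (hcomm ⟨x, hx⟩ ⟨y, hy⟩)

end TripleHom

section HermPart

variable {N : VonNeumannAlgebra H} {β : (H →L[ℂ] H) →ₗ[ℂ] (H →L[ℂ] H)}

/-- The restriction of `β` to an endomorphism of the *-algebra `N`. -/
def vnRestrict (hβ : ∀ x ∈ N, β x ∈ N) : N.toStarSubalgebra →ₗ[ℂ] N.toStarSubalgebra :=
  β.restrict (p := vnSubmodule N) (q := vnSubmodule N) hβ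

lemma isStarAntiInvolution_vnRestrict (hβ : ∀ x ∈ N, β x ∈ N)
    (anti : ∀ x ∈ N, ∀ y ∈ N, β (x * y) = β y * β x)
    (map_star : ∀ x ∈ N, β (star x) = star (β x)) (map_map : ∀ x ∈ N, β (β x) = x) :
    IsStarAntiInvolution (vnRestrict hβ) where
  map_mul x y := Subtype.ext (anti x x.2 y y.2)
  map_map x := Subtype.ext (map_map x x.2)
  map_star x := Subtype.ext (map_star x x.2)

lemma coe_mem_hermPart_iff (hβ : ∀ x ∈ N, β x ∈ N) {x : N.toStarSubalgebra} :
    (x : H →L[ℂ] H) ∈ hermPart N β ↔ vnRestrict hβ x = x :=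
  ⟨fun hx => Subtype.ext hx.2, fun hx => ⟨x.2, congrArg Subtype.val hx⟩⟩

lemma isTripleHomOnSymm_of_hermPart {K L : Type} [NormedAddCommGroup K] [InnerProductSpace ℂ K]
    [CompleteSpace K] [NormedAddCommGroup L] [InnerProductSpace ℂ L] [CompleteSpace L]
    (hβ : ∀ x ∈ N, β x ∈ N) (hβ' : IsStarAntiInvolution (vnRestrict hβ))
    {π : (H →L[ℂ] H) →ₗ[ℂ] (K →L[ℂ] L)}
    (hπ : ∀ x ∈ hermPart N β, ∀ y ∈ hermPart N β, ∀ z ∈ hermPart N β,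
      jtri x y z ∈ hermPart N β → π (jtri x y z) = jtri (π x) (π y) (π z)) :
    IsTripleHomOnSymm (vnRestrict hβ) (π ∘ₗ (vnSubmodule N).subtype) := by
  intro x y z hx hy hz
  have hmem : ((2 : ℂ)⁻¹ • (x * star y * z + z * star y * x) : N.toStarSubalgebra).1 ∈
      hermPart N β := by
    refine (coe_mem_hermPart_iff hβ).2 ?_
    simp only [map_smul, map_add, hβ'.map_mul, hβ'.map_star, hx, hy, hz, mul_assoc, add_comm]
  exact hπ x ((coe_mem_hermPart_iff hβ).2 hx) y ((coe_mem_hermPart_iff hβ).2 hy) z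
    ((coe_mem_hermPart_iff hβ).2 hz) hmem

theorem universal_tro_of_hermitian_part_general (hN : IsContinuousVNA N)
    (hβ : ∀ x ∈ N, β x ∈ N) (hβ' : IsStarAntiInvolution (vnRestrict hβ)) :
    (∀ T : Submodule ℂ (H →L[ℂ] H), (∀ x ∈ T, ∀ y ∈ T, ∀ z ∈ T, tri x y z ∈ T) →
      hermPart N β ≤ T → vnSubmodule N ≤ T) ∧
    (∀ (K L : Type) [NormedAddCommGroup K] [InnerProductSpace ℂ K] [CompleteSpace K]
      [NormedAddCommGroup L] [InnerProductSpace ℂ L] [CompleteSpace L],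
      ∀ S : Submodule ℂ (K →L[ℂ] L), (∀ x ∈ S, ∀ y ∈ S, ∀ z ∈ S, tri x y z ∈ S) →
      ∀ π : hermPart N β →ₗ[ℂ] (K →L[ℂ] L),
        (∀ x, π x ∈ S) →
        (∀ (x y z : hermPart N β) (h : jtri (x : H →L[ℂ] H) y z ∈ hermPart N β),
          π ⟨jtri (x : H →L[ℂ] H) y z, h⟩ = jtri (π x) (π y) (π z)) →
        ∃ πt : vnSubmodule N →ₗ[ℂ] (K →L[ℂ] L),
          (∀ a, πt a ∈ S) ∧
          (∀ (a b c : vnSubmodule N) (h : tri (a : H →L[ℂ] H) b c ∈ vnSubmodule N),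
            πt ⟨tri (a : H →L[ℂ] H) b c, h⟩ = tri (πt a) (πt b) (πt c)) ∧
          (∀ (x : hermPart N β) (hx : (x : H →L[ℂ] H) ∈ vnSubmodule N),
            πt ⟨x, hx⟩ = π x)) := by
  obtain ⟨e, he⟩ := hβ'.exists_isSymmMatrixUnits hN.hasNoAbelianProjection
  have mem_hermPart {x} := (coe_mem_hermPart_iff hβ (x := x)).2
  refine ⟨fun T hT hle x hx => ?_, fun K L _ _ _ _ _ _ S hS π hπS hπ => ?_⟩
  · exact he.map_mem_of_tri_mem hβ'.toIsAntiInvolution hT (φ := (vnSubmodule N).subtype)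
      (fun a b c => rfl) (fun y hy => hle (mem_hermPart hy)) ⟨x, hx⟩
  · obtain ⟨π', rfl⟩ := π.exists_extend
    have htriple : IsTripleHomOnSymm (vnRestrict hβ) (π' ∘ₗ (vnSubmodule N).subtype) :=
      isTripleHomOnSymm_of_hermPart hβ hβ' fun x hx y hy z hz => hπ ⟨x, hx⟩ ⟨y, hy⟩ ⟨z, hz⟩
    obtain ⟨πt, hπt, htri⟩ := htriple.exists_extension hβ' he (by simp)
    refine ⟨πt, fun a => ?_, fun a b c _ => htri a b c, fun x hx => ?_⟩
    · exact he.map_mem_of_tri_mem hβ'.toIsAntiInvolution hS htri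
        (fun y hy => (hπt y hy).symm ▸ hπS ⟨y, mem_hermPart hy⟩) a
    · exact hπt ⟨x, hx⟩ ((coe_mem_hermPart_iff hβ).1 x.2)

end HermPart

/-- for a continuous von Neumann algebra `N` with a *-antiautomorphism `β` of
order 2, `N` regarded as a TRO, together with the inclusion map `H(N,β) ↪ N`, is a universal
enveloping TRO of the JC*-triple `H(N,β)`: `H(N,β)` generates `N` as a TRO, and every triple
homomorphism from `H(N,β)` into a TRO `S` extends to a TRO homomorphism `N → S`;
that is, `T*(H(N,β)) = N`. -/
theorem universal_tro_of_hermitian_part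
    (N : VonNeumannAlgebra H) (hN : IsContinuousVNA N)
    (β : (H →L[ℂ] H) →ₗ[ℂ] (H →L[ℂ] H))
    (hβmem : ∀ x ∈ N, β x ∈ N)
    (hβanti : ∀ x ∈ N, ∀ y ∈ N, β (x * y) = β y * β x)
    (hβstar : ∀ x ∈ N, β (star x) = star (β x))
    (hβsq : ∀ x ∈ N, β (β x) = x) :
    -- `H(N,β)` generates `N` as a TRO:
    (∀ T : Submodule ℂ (H →L[ℂ] H), IsTRO T → hermPart N β ≤ T → vnSubmodule N ≤ T) ∧
    -- every triple homomorphism from `H(N,β)` into a TRO extends to a TRO homomorphism on `N`: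
    (∀ (K' H' : Type) [NormedAddCommGroup K'] [InnerProductSpace ℂ K'] [CompleteSpace K']
      [NormedAddCommGroup H'] [InnerProductSpace ℂ H'] [CompleteSpace H'],
      ∀ S : Submodule ℂ (K' →L[ℂ] H'), IsTRO S →
      ∀ π : ↥(hermPart N β) →ₗ[ℂ] (K' →L[ℂ] H'),
        (∀ x, π x ∈ S) →
        (∀ (x y z : ↥(hermPart N β))
          (h : jtri (x : H →L[ℂ] H) y z ∈ hermPart N β),
          π ⟨jtri (x : H →L[ℂ] H) y z, h⟩ = jtri (π x) (π y) (π z)) →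
        ∃ πt : ↥(vnSubmodule N) →ₗ[ℂ] (K' →L[ℂ] H'),
          (∀ a, πt a ∈ S) ∧
          (∀ (a b c : ↥(vnSubmodule N)) (h : tri (a : H →L[ℂ] H) b c ∈ vnSubmodule N),
            πt ⟨tri (a : H →L[ℂ] H) b c, h⟩ = tri (πt a) (πt b) (πt c)) ∧
          (∀ (x : ↥(hermPart N β)) (hx : (x : H →L[ℂ] H) ∈ vnSubmodule N),
            πt ⟨(x : H →L[ℂ] H), hx⟩ = π x)) := by
  have h := universal_tro_of_hermitian_part_general hN hβmem
    (isStarAntiInvolution_vnRestrict hβmem hβanti hβstar hβsq)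
  exact ⟨fun T hT => h.1 T hT.2, fun K' H' _ _ _ _ _ _ S hS => h.2 K' H' S hS.2⟩
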